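/- arXiv:math/0302017 — 4 statements merged into one kernel-verified Lean document; each statement's English description precedes it below -/
import Mathlib

section
/- Let p be a prime and set 𝐩 = p if p is odd and 𝐩 = 4 if p = 2. Let D be a (possibly noncommutative) ring that is an algebra over the ring ℤ_p of p-adic integers, torsion-free as a ℤ_p-module, and Hausdorff and complete with respect to the p-adic filtration p^i D. Let φ : D → D be a ℤ_p-linear derivation (additive, ℤ_p-linear, and φ(x y) = φ(x) y + x φ(y)) such that φ(x) ∈ 𝐩D for every x ∈ D. Then there exists a ring automorphism ψ of D such that: (i) ψ(x) − x ∈ 𝐩D for every x; (ii) for every x ∈ D and every i ≥ 0 there exists u ∈ D with i! · u = φ^{∘ i}(x), and for every x and every k there exists N such that for all n ≥ N and every finite sequence u₀, …, u_n ∈ D with i! · u_i = φ^{∘ i}(x) for each 0 ≤ i ≤ n, one has ψ(x) − (u₀ + ⋯ + u_n) ∈ p^k D. (In other words, exp(φ) is well defined as a p-adic limit and is an automorphism of D.) -/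
/-- `𝐩 = p` for odd `p` and `𝐩 = 4` for `p = 2`. -/
def padicBound (p : ℕ) : ℕ := if p = 2 then 4 else p

/-!
Write `𝐩 = p ^ e`; the choice of `𝐩` ensures `2 ≤ e * (p - 1)`. Since `(p - 1) * v_p(i!) < i`
while `φ^{∘ i}` takes values in `p ^ (e * i) D`, the divided powers `u i = φ^{∘ i} / i!` exist
and tend to zero uniformly, so their sum `ψ` exists. The Leibniz rule for `φ^{∘ n}` says that
`(u i)` is a Hasse–Schmidt derivation, and the Cauchy product then shows that `ψ` is
multiplicative. Finally `ψ` is bijective because it is the identity modulo `p` and `D` is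
`p`-adically complete.
-/

open Filter Finset Submodule TensorProduct

section SMulTop

variable {R M N : Type*} [CommRing R] [AddCommGroup M] [Module R M] [AddCommGroup N] [Module R N]

lemma sum_range_smodEq_sum_range {U : Submodule R M} {f : ℕ → M} {m n : ℕ}
    (hf : ∀ i, m ≤ i → f i ∈ U) (hmn : m ≤ n) :
    ∑ i ∈ range n, f i ≡ ∑ i ∈ range m, f i [SMOD U] := by
  rw [SModEq.sub_mem, ← sum_Ico_eq_sub f hmn]
  exact sum_mem fun i hi => hf i (Finset.mem_Ico.1 hi).1

lemma map_mem_mul_smul_top {J K : Ideal R} {f : M →ₗ[R] N} (hf : ∀ x, f x ∈ K • (⊤ : Submodule R N))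
    {x : M} (hx : x ∈ J • (⊤ : Submodule R M)) : f x ∈ (J * K) • (⊤ : Submodule R N) := by
  have hrange : (J • (⊤ : Submodule R M)).map f ≤ J • K • ⊤ := by
    rw [map_smul'']
    exact smul_mono_right J (map_le_iff_le_comap.2 fun y _ => hf y)
  rw [mul_smul]
  exact hrange (mem_map_of_mem hx)

lemma iterate_mem_pow_smul_top {J : Ideal R} {f : M →ₗ[R] M}
    (hf : ∀ x, f x ∈ J • (⊤ : Submodule R M)) (i : ℕ) (x : M) :
    f^[i] x ∈ J ^ i • (⊤ : Submodule R M) := by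
  induction i with
  | zero => simp
  | succ i ih =>
    rw [Function.iterate_succ_apply', pow_succ]
    exact map_mem_mul_smul_top hf ih

lemma bijective_of_forall_sub_self_mem_smul_top {I : Ideal R} [IsAdicComplete I M] {f : M →ₗ[R] M}
    (hf : ∀ x, f x - x ∈ I • (⊤ : Submodule R M)) : Function.Bijective f := by
  constructor
  · refine (injective_iff_map_eq_zero f).2 fun x hx => ?_
    have hmem : ∀ y, (LinearMap.id - f : M →ₗ[R] M) y ∈ I • (⊤ : Submodule R M) := fun y => by
      simpa using neg_mem (hf y)
    have hfix : (LinearMap.id - f : M →ₗ[R] M) x = x := by simp [hx]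
    refine IsHausdorff.haus (I := I) inferInstance x fun n => SModEq.zero.2 ?_
    simpa only [Function.iterate_fixed hfix] using iterate_mem_pow_smul_top hmem n x
  · refine surjective_of_mkQ_comp_surjective (I := I) fun q => ?_
    obtain ⟨y, rfl⟩ := mkQ_surjective _ q
    exact ⟨y, SModEq.sub_mem.2 (hf y)⟩

lemma mul_smodEq_mul {D : Type*} [Ring D] [Algebra R D] {J : Ideal R} {x₁ x₂ y₁ y₂ : D}
    (hx : x₁ ≡ x₂ [SMOD J • (⊤ : Submodule R D)]) (hy : y₁ ≡ y₂ [SMOD J • (⊤ : Submodule R D)]) :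
    x₁ * y₁ ≡ x₂ * y₂ [SMOD J • (⊤ : Submodule R D)] := by
  rw [SModEq.sub_mem] at *
  rw [show x₁ * y₁ - x₂ * y₂ = (x₁ - x₂) * y₁ + x₂ * (y₁ - y₂) by noncomm_ring]
  exact add_mem (smul_top_le_comap_smul_top J (LinearMap.mulRight R y₁) hx)
    (smul_top_le_comap_smul_top J (LinearMap.mulLeft R x₂) hy)

end SMulTop

section AdicSum

variable {R M N : Type*} [CommRing R] [AddCommGroup M] [Module R M] [AddCommGroup N] [Module R N]

/-- The sequence of linear maps `u` tends to zero `I`-adically, uniformly on its domain. -/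
def IsAdicNull (I : Ideal R) (u : ℕ → M →ₗ[R] N) : Prop :=
  ∀ k, ∀ᶠ i in atTop, ∀ x, u i x ∈ I ^ k • (⊤ : Submodule R N)

/-- The series of linear maps `∑ u i` converges `I`-adically to `f`, uniformly on its domain. -/
def HasAdicSum (I : Ideal R) (u : ℕ → M →ₗ[R] N) (f : M →ₗ[R] N) : Prop :=
  ∀ k, ∀ᶠ n in atTop, ∀ x, f x ≡ ∑ i ∈ range n, u i x [SMOD I ^ k • (⊤ : Submodule R N)]

variable {I : Ideal R}

lemma IsAdicNull.exists_hasAdicSum [IsAdicComplete I N] {u : ℕ → M →ₗ[R] N}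
    (hu : IsAdicNull I u) : ∃ f, HasAdicSum I u f := by
  have hstable : ∀ k, ∃ g, ∀ᶠ n in atTop,
      mkQ (I ^ k • (⊤ : Submodule R N)) ∘ₗ ∑ i ∈ range n, u i = g := fun k => by
    obtain ⟨m, hm⟩ := eventually_atTop.1 (hu k)
    refine ⟨mkQ _ ∘ₗ ∑ i ∈ range m, u i, eventually_atTop.2 ⟨m, fun n hn => ?_⟩⟩
    ext x
    simp only [LinearMap.comp_apply, LinearMap.sum_apply]
    exact sum_range_smodEq_sum_range (fun i hi => hm i hi x) hn
  choose g hg using hstable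
  have hcompat : ∀ {m n : ℕ} (hmn : m ≤ n), factorPow I N hmn ∘ₗ g n = g m := fun {m n} hmn => by
    obtain ⟨j, hjm, hjn⟩ := ((hg m).and (hg n)).exists
    rw [← hjm, ← hjn]
    rfl
  refine ⟨IsAdicComplete.lift I g hcompat, fun k => (hg k).mono fun n hn x => ?_⟩
  rw [SModEq.def, IsAdicComplete.mk_lift, ← hn, LinearMap.comp_apply, LinearMap.sum_apply,
    mkQ_apply]

lemma HasAdicSum.isAdicNull {u : ℕ → M →ₗ[R] N} {f : M →ₗ[R] N} (hf : HasAdicSum I u f) :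
    IsAdicNull I u := fun k => by
  filter_upwards [hf k, (tendsto_add_atTop_nat 1).eventually (hf k)] with n hn hn' x
  rw [← sum_range_succ_sub_sum fun i => u i x]
  exact SModEq.sub_mem.1 ((hn' x).symm.trans (hn x))

lemma HasAdicSum.sub_zero_mem {u : ℕ → M →ₗ[R] N} {f : M →ₗ[R] N} (hf : HasAdicSum I u f) {k : ℕ}
    (hu : ∀ i, i ≠ 0 → ∀ x, u i x ∈ I ^ k • (⊤ : Submodule R N)) (x : M) :
    f x - u 0 x ∈ I ^ k • (⊤ : Submodule R N) := by
  obtain ⟨n, hn, h1n⟩ := ((hf k).and (eventually_ge_atTop 1)).exists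
  have htail := sum_range_smodEq_sum_range (fun i hi => hu i (Nat.one_le_iff_ne_zero.1 hi) x) h1n
  rw [sum_range_one] at htail
  exact SModEq.sub_mem.1 ((hn x).trans htail)

end AdicSum

section NatPrime

variable {p : ℕ} {R M : Type*} [CommRing R] [AddCommGroup M] [Module R M]

lemma mem_span_natCast_pow_smul_top {k : ℕ} {x : M} :
    x ∈ Ideal.span {(p : R)} ^ k • (⊤ : Submodule R M) ↔ ∃ y, x = p ^ k • y := by
  rw [Ideal.span_singleton_pow, ideal_span_singleton_smul, mem_smul_pointwise_iff_exists,
    ← Nat.cast_pow]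
  simp only [Submodule.mem_top, true_and, Nat.cast_smul_eq_nsmul, eq_comm]

variable (R) in
lemma nsmul_surjective_of_coprime [IsAdicComplete (Ideal.span {(p : R)}) M] {n : ℕ}
    (hn : n.Coprime p) : Function.Surjective fun x : M => n • x := by
  obtain ⟨a, b, hab⟩ : ∃ a b : ℤ, (n : ℤ) * a = 1 + p * b :=
    ⟨n.gcdA p, -n.gcdB p, by linarith [Nat.gcd_eq_gcd_ab n p, congrArg (Nat.cast (R := ℤ)) hn]⟩
  refine surjective_of_mkQ_comp_surjective (I := Ideal.span {(p : R)})
    (f := n • (LinearMap.id : M →ₗ[R] M)) fun q => ?_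
  obtain ⟨x, rfl⟩ := mkQ_surjective _ q
  refine ⟨a • x, SModEq.sub_mem.2 ?_⟩
  rw [← pow_one (Ideal.span _), mem_span_natCast_pow_smul_top]
  refine ⟨b • x, ?_⟩
  simp only [LinearMap.smul_apply, LinearMap.id_apply, pow_one, ← natCast_zsmul, smul_smul, hab,
    add_smul, one_smul, add_sub_cancel_left]

lemma exists_mem_span_pow_smul_top_nsmul_eq [Fact p.Prime] [IsAdicComplete (Ideal.span {(p : R)}) M]
    {n s m : ℕ} (hn : n ≠ 0) (hm : s + padicValNat p n ≤ m) {x : M}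
    (hx : x ∈ Ideal.span {(p : R)} ^ m • (⊤ : Submodule R M)) :
    ∃ z ∈ Ideal.span {(p : R)} ^ s • (⊤ : Submodule R M), n • z = x := by
  obtain ⟨y, rfl⟩ := mem_span_natCast_pow_smul_top.1 hx
  obtain ⟨w, rfl⟩ := nsmul_surjective_of_coprime (p := p) R
    (Nat.coprime_ordCompl Fact.out hn).symm y
  obtain ⟨t, rfl⟩ := Nat.exists_eq_add_of_le hm
  refine ⟨p ^ s • p ^ t • w, mem_span_natCast_pow_smul_top.2 ⟨_, rfl⟩, ?_⟩
  have hfac := Nat.ordProj_mul_ordCompl_eq_self n p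
  rw [← Nat.factorization_def n Fact.out]
  simp only [smul_smul]
  congr 1
  nth_rw 1 [← hfac]
  ring

lemma add_half_add_padicValNat_factorial_le [Fact p.Prime] {e : ℕ} (he : 2 ≤ e * (p - 1)) {i : ℕ}
    (hi : i ≠ 0) : e + (i - 1) / 2 + padicValNat p i.factorial ≤ e * i := by
  have hval : (p - 1) * padicValNat p i.factorial ≤ i - 1 :=
    Nat.le_sub_one_of_lt (sub_one_mul_padicValNat_factorial_lt_of_ne_zero p hi)
  have hdouble : 2 * padicValNat p i.factorial ≤ e * (i - 1) := calc
    2 * padicValNat p i.factorial ≤ e * (p - 1) * padicValNat p i.factorial := by gcongr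
    _ = e * ((p - 1) * padicValNat p i.factorial) := mul_assoc ..
    _ ≤ e * (i - 1) := by gcongr
  obtain ⟨j, rfl⟩ := Nat.exists_eq_succ_of_ne_zero hi
  have hej : j ≤ e * j := Nat.le_mul_of_pos_left j (Nat.pos_of_mul_pos_right (two_pos.trans_le he))
  rw [Nat.succ_sub_one] at hdouble ⊢
  rw [Nat.mul_succ]
  omega

end NatPrime

section DividedPowers

variable {p e : ℕ} {R M : Type*} [CommRing R] [AddCommGroup M] [Module R M]

lemma exists_linearMap_nsmul_eq {N : Type*} [AddCommGroup N] [Module R N] [IsAddTorsionFree N]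
    {U : Submodule R N} {f : M →ₗ[R] N} {n : ℕ} (hn : n ≠ 0) (hf : ∀ x, ∃ z ∈ U, n • z = f x) :
    ∃ g : M →ₗ[R] N, ∀ x, g x ∈ U ∧ n • g x = f x := by
  choose g hgU hg using hf
  refine ⟨⟨⟨g, fun x y => ?_⟩, fun c x => ?_⟩, fun x => ⟨hgU x, hg x⟩⟩ <;>
    apply nsmul_right_injective hn
  · simp only [smul_add, hg, map_add]
  · simp only [smul_comm n, hg, map_smul, RingHom.id_apply]

/-- `u i` is the divided power `φ^{∘ i} / i!` of the endomorphism `φ`; it is characterised without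
division, which determines it when there is no additive torsion. -/
def IsDividedPowers (φ : M →ₗ[R] M) (u : ℕ → M →ₗ[R] M) : Prop :=
  ∀ i x, i.factorial • u i x = φ^[i] x

lemma exists_isDividedPowers [Fact p.Prime] [IsAddTorsionFree M]
    [IsAdicComplete (Ideal.span {(p : R)}) M] (he : 2 ≤ e * (p - 1)) {φ : M →ₗ[R] M}
    (hφ : ∀ x, φ x ∈ Ideal.span {(p : R)} ^ e • (⊤ : Submodule R M)) :
    ∃ u, IsDividedPowers φ u ∧ ∀ i, i ≠ 0 → ∀ x,
      u i x ∈ Ideal.span {(p : R)} ^ (e + (i - 1) / 2) • (⊤ : Submodule R M) := by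
  have hdiv : ∀ i, ∃ g : M →ₗ[R] M, (∀ x, i.factorial • g x = φ^[i] x) ∧ (i ≠ 0 → ∀ x,
      g x ∈ Ideal.span {(p : R)} ^ (e + (i - 1) / 2) • (⊤ : Submodule R M)) := fun i => by
    rcases eq_or_ne i 0 with rfl | hi
    · exact ⟨.id, by simp, by simp⟩
    · have hiter : ∀ x, (φ ^ i) x ∈ Ideal.span {(p : R)} ^ (e * i) • (⊤ : Submodule R M) :=
        fun x => by
          simpa only [Module.End.pow_apply, pow_mul] using iterate_mem_pow_smul_top hφ i x
      obtain ⟨g, hg⟩ := exists_linearMap_nsmul_eq i.factorial_ne_zero fun x =>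
        exists_mem_span_pow_smul_top_nsmul_eq i.factorial_ne_zero
          (add_half_add_padicValNat_factorial_le he hi) (hiter x)
      exact ⟨g, fun x => by rw [(hg x).2, Module.End.pow_apply], fun _ x => (hg x).1⟩
  choose u hu hmem using hdiv
  exact ⟨u, hu, hmem⟩

end DividedPowers

section HasseSchmidt

variable {R D : Type*} [CommRing R] [Ring D] [Algebra R D]

/-- A Hasse–Schmidt (or higher) derivation: `x ↦ ∑ u i x * T ^ i` is a ring homomorphism
`D → D⟦T⟧` lifting the identity. -/
structure IsHasseSchmidt (u : ℕ → D →ₗ[R] D) : Prop where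
  zero_apply : ∀ x, u 0 x = x
  map_mul : ∀ n x y, u n (x * y) = ∑ ij ∈ antidiagonal n, u ij.1 x * u ij.2 y

lemma iterate_map_mul_of_leibniz {φ : D →ₗ[R] D} (hφ : ∀ x y, φ (x * y) = φ x * y + x * φ y)
    (n : ℕ) (x y : D) :
    φ^[n] (x * y) = ∑ ij ∈ antidiagonal n, n.choose ij.1 • (φ^[ij.1] x * φ^[ij.2] y) := by
  -- `φ` acts on the two factors of `D ⊗ D` by commuting maps whose sum covers `φ` on `D` along
  -- multiplication, so the formula is the image of the binomial theorem.
  let φl : Module.End R (D ⊗[R] D) := φ.rTensor D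
  let φr : Module.End R (D ⊗[R] D) := φ.lTensor D
  have hcomm : Commute φl φr := by ext; simp [φl, φr]
  have hmul : φ ∘ₗ LinearMap.mul' R D = LinearMap.mul' R D ∘ₗ (φl + φr) := by
    ext; simp [φl, φr, hφ]
  have hpow := LinearMap.congr_fun (Module.End.commute_pow_left_of_commute hmul n) (x ⊗ₜ[R] y)
  simpa [-nsmul_eq_mul, hcomm.add_pow', φl, φr, Module.End.pow_apply, LinearMap.rTensor_pow,
    LinearMap.lTensor_pow] using hpow

lemma IsDividedPowers.isHasseSchmidt [IsAddTorsionFree D] {φ : D →ₗ[R] D} {u : ℕ → D →ₗ[R] D}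
    (hu : IsDividedPowers φ u) (hφ : ∀ x y, φ (x * y) = φ x * y + x * φ y) :
    IsHasseSchmidt u where
  zero_apply x := by simpa using hu 0 x
  map_mul n x y := by
    refine nsmul_right_injective (Nat.factorial_ne_zero n) ?_
    simp only [hu n, iterate_map_mul_of_leibniz hφ, smul_sum]
    refine sum_congr rfl fun ij hij => ?_
    obtain rfl := mem_antidiagonal.1 hij
    rw [← hu, ← hu, smul_mul_smul_comm, smul_smul, ← mul_assoc, Nat.choose_symm_add,
      Nat.add_choose_mul_factorial_mul_factorial]

variable {I : Ideal R} {u : ℕ → D →ₗ[R] D}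

lemma IsHasseSchmidt.sum_range_map_mul_smodEq (hu : IsHasseSchmidt u) {J : Ideal R} {m n : ℕ}
    (hm : ∀ i, m ≤ i → ∀ x, u i x ∈ J • (⊤ : Submodule R D)) (hmn : 2 * m ≤ n) (x y : D) :
    ∑ i ∈ range n, u i (x * y) ≡
      (∑ i ∈ range n, u i x) * ∑ i ∈ range n, u i y [SMOD J • (⊤ : Submodule R D)] := by
  have hdiag : ∑ i ∈ range n, u i (x * y) =
      ∑ i ∈ range n, u i x * ∑ j ∈ range (n - i), u j y := by
    simp only [mul_sum, ← sum_range_diag_flip n fun i j => u i x * u j y, hu.map_mul,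
      Finset.Nat.sum_antidiagonal_eq_sum_range_succ fun i j => u i x * u j y]
  rw [hdiag, sum_mul]
  refine SModEq.sum fun i _ => ?_
  rcases le_total m i with hi | hi
  · have hzero : ∀ z, u i x * z ≡ 0 [SMOD J • (⊤ : Submodule R D)] := fun z => by
      simpa using mul_smodEq_mul (SModEq.zero.2 (hm i hi x)) (.refl z)
    exact (hzero _).trans (hzero _).symm
  · have htail : ∀ j, n - i ≤ j → u j y ∈ J • (⊤ : Submodule R D) :=
      fun j hj => hm j (by omega) y
    exact mul_smodEq_mul .rfl (sum_range_smodEq_sum_range htail (Nat.sub_le n i)).symm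

lemma HasAdicSum.map_mul [IsHausdorff I D] {f : D →ₗ[R] D} (hf : HasAdicSum I u f)
    (hu : IsHasseSchmidt u) (x y : D) : f (x * y) = f x * f y := by
  refine (IsHausdorff.eq_iff_smodEq (I := I)).2 fun k => ?_
  obtain ⟨m, hm⟩ := eventually_atTop.1 (hf.isAdicNull k)
  obtain ⟨n, hn, hmn⟩ := ((hf k).and (eventually_ge_atTop (2 * m))).exists
  calc f (x * y)
      ≡ ∑ i ∈ range n, u i (x * y) [SMOD I ^ k • (⊤ : Submodule R D)] := hn (x * y)
    _ ≡ (∑ i ∈ range n, u i x) * ∑ i ∈ range n, u i y [SMOD I ^ k • (⊤ : Submodule R D)] :=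
        hu.sum_range_map_mul_smodEq hm hmn x y
    _ ≡ f x * f y [SMOD I ^ k • (⊤ : Submodule R D)] := mul_smodEq_mul (hn x).symm (hn y).symm

theorem HasAdicSum.exists_algEquiv [IsAdicComplete I D] {f : D →ₗ[R] D} (hf : HasAdicSum I u f)
    (hu : IsHasseSchmidt u) (hI : ∀ i, i ≠ 0 → ∀ x, u i x ∈ I • (⊤ : Submodule R D)) :
    ∃ ψ : D ≃ₐ[R] D, ∀ x, ψ x = f x := by
  have hmul := hf.map_mul hu
  have hbij : Function.Bijective f := bijective_of_forall_sub_self_mem_smul_top (I := I) fun x => by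
    simpa [hu.zero_apply] using hf.sub_zero_mem (k := 1) (by simpa using hI) x
  have hone : f 1 = 1 := by
    obtain ⟨y, hy⟩ := hbij.surjective 1
    simpa [hy] using (hmul 1 y).symm
  exact ⟨.ofBijective (.ofLinearMap f hone hmul) hbij, fun _ => rfl⟩

end HasseSchmidt

lemma exists_padicBound_eq_pow (p : ℕ) [hp : Fact p.Prime] :
    ∃ e, padicBound p = p ^ e ∧ 2 ≤ e * (p - 1) := by
  rcases hp.out.eq_two_or_odd' with rfl | hodd
  · exact ⟨2, rfl, le_rfl⟩
  · have hp2 : p ≠ 2 := by rintro rfl; exact absurd hodd (by decide)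
    exact ⟨1, by simp [padicBound, hp2], by have := hp.out.two_le; omega⟩

theorem exp_of_derivation_is_automorphism_general {p e : ℕ} [Fact p.Prime] (he : 2 ≤ e * (p - 1))
    {R D : Type*} [CommRing R] [Ring D] [Algebra R D] [IsAddTorsionFree D]
    [IsAdicComplete (Ideal.span {(p : R)}) D] (φ : D →ₗ[R] D)
    (hLeibniz : ∀ x y, φ (x * y) = φ x * y + x * φ y) (hφ : ∀ x, ∃ y, φ x = p ^ e • y) :
    ∃ ψ : D ≃ₐ[R] D,
      (∀ x, ∃ y, ψ x - x = p ^ e • y) ∧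
      (∀ x i, ∃ u : D, i.factorial • u = φ^[i] x) ∧
      (∀ x k, ∃ N, ∀ n, N ≤ n → ∀ u : ℕ → D, (∀ i, i ≤ n → i.factorial • u i = φ^[i] x) →
        ∃ y, ψ x - ∑ i ∈ range (n + 1), u i = p ^ k • y) := by
  simp only [← mem_span_natCast_pow_smul_top (R := R)] at hφ ⊢
  obtain ⟨u, hu, hmem⟩ := exists_isDividedPowers he hφ
  have hHS := hu.isHasseSchmidt hLeibniz
  have hnull : IsAdicNull (Ideal.span {(p : R)}) u := fun k =>
    (eventually_ge_atTop (2 * k + 1)).mono fun i hi x =>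
      pow_smul_top_le _ _ (by omega : k ≤ e + (i - 1) / 2) (hmem i (by omega) x)
  obtain ⟨f, hf⟩ := hnull.exists_hasAdicSum
  have he0 : 1 ≤ e := Nat.pos_of_mul_pos_right (two_pos.trans_le he)
  have hmem_e : ∀ i, i ≠ 0 → ∀ x, u i x ∈ Ideal.span {(p : R)} ^ e • (⊤ : Submodule R D) :=
    fun i hi x => pow_smul_top_le _ _ (Nat.le_add_right ..) (hmem i hi x)
  obtain ⟨ψ, hψ⟩ := hf.exists_algEquiv hHS fun i hi x => by
    simpa using pow_smul_top_le _ _ he0 (hmem_e i hi x)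
  refine ⟨ψ, fun x => ?_, fun x i => ⟨u i x, hu i x⟩, fun x k => ?_⟩
  · simpa only [hψ, hHS.zero_apply] using hf.sub_zero_mem hmem_e x
  · obtain ⟨N, hN⟩ := eventually_atTop.1 (hf k)
    refine ⟨N, fun n hn v hv => ?_⟩
    have huv : ∀ i ∈ range (n + 1), v i = u i x := fun i hi =>
      nsmul_right_injective i.factorial_ne_zero
        ((hv i (Finset.mem_range_succ_iff.1 hi)).trans (hu i x).symm)
    rw [sum_congr rfl huv, hψ]
    exact SModEq.sub_mem.1 (hN (n + 1) (hn.trans n.le_succ) x)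

/-- `exp φ` is a well-defined automorphism. Let `D` be a torsion-free
`ℤ_p`-algebra, complete and Hausdorff for the `p`-adic filtration, and let `φ` be a
`ℤ_p`-linear derivation of `D` with `φ(D) ⊆ 𝐩D`. Then there is a ring automorphism `ψ` of
`D` with `(ψ − 1)(D) ⊆ 𝐩D` which is the `p`-adic limit of the partial sums of
`∑ φ^{∘i}/i!`. -/
theorem exp_of_derivation_is_automorphism (p : ℕ) [Fact p.Prime] (D : Type) [Ring D]
    [Algebra (PadicInt p) D]
    (hTF : ∀ c : PadicInt p, c ≠ 0 → Function.Injective fun x : D => c • x)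
    [IsAdicComplete (Ideal.span {(p : PadicInt p)}) D]
    (φ : D →ₗ[PadicInt p] D)
    (hLeibniz : ∀ x y : D, φ (x * y) = φ x * y + x * φ y)
    (hφ : ∀ x : D, ∃ y : D, φ x = padicBound p • y) :
    ∃ ψ : D ≃+* D,
      (∀ x : D, ∃ y : D, ψ x - x = padicBound p • y) ∧
      (∀ x : D, ∀ i : ℕ, ∃ u : D, i.factorial • u = (⇑φ)^[i] x) ∧
      (∀ x : D, ∀ k : ℕ, ∃ N : ℕ, ∀ n : ℕ, N ≤ n → ∀ u : ℕ → D,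
        (∀ i : ℕ, i ≤ n → i.factorial • u i = (⇑φ)^[i] x) →
        ∃ y : D, ψ x - (∑ i ∈ Finset.range (n + 1), u i) = p ^ k • y) := by
  obtain ⟨e, hpe, he⟩ := exists_padicBound_eq_pow p
  have : IsAddTorsionFree D := ⟨fun n hn x y hxy => hTF n (Nat.cast_ne_zero.2 hn) <| by
    simpa only [Nat.cast_smul_eq_nsmul] using hxy⟩
  rw [hpe] at hφ ⊢
  obtain ⟨ψ, hψ⟩ := exp_of_derivation_is_automorphism_general he φ hLeibniz hφ
  exact ⟨ψ.toRingEquiv, hψ⟩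
end

section
/- Let p be a prime and let R be a commutative Noetherian local pro-p domain of characteristic zero whose Krull dimension equals d + 1 for a natural number d. Then for every natural number n and every subgroup G of GL_n(R) there exist a natural number m and an injective group homomorphism from G into GL_m(ℤ_p⟦t₁, …, t_d⟧), the general linear group over the power series ring in d variables over the p-adic integers. -/
/-!
By Cohen's structure theorem, `R` is finite over a power series ring `A = ℤ_p⟦t₁, …, t_d⟧`, so it
embeds in `M_r(A[1/c])` for some nonzero `c ∈ A`. Composing substitutions `t ↦ qt` and
`t ↦ t + b` gives an injective endomorphism of `A` under which `c` becomes a nonzero constant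
times a unit. Hence `R` embeds in `M_r(ℚ_p⟦t₁, …, t_d⟧)` with image of bounded denominator.
The constant terms of this embedding form a representation with bounded denominators, which
therefore preserves a lattice: after conjugation they have entries in `ℤ_p`. The substitution
`t ↦ qt`, with `q` a common denominator, then makes all the coefficients integral.
-/

open Matrix MvPowerSeries
open scoped MvPowerSeries.WithPiTopology

section MatrixEmbedding

theorem range_mapMatrix {n R S : Type*} [Fintype n] [DecidableEq n] [Ring R] [Ring S]
    (f : R →+* S) : (f.mapMatrix (m := n)).range = f.range.matrix := by
  ext M
  refine ⟨?_, fun h => ?_⟩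
  · rintro ⟨N, rfl⟩ i j
    exact ⟨N i j, rfl⟩
  · choose N hN using h
    exact ⟨Matrix.of N, Matrix.ext hN⟩

theorem exists_ringHom_comp_eq {R S T : Type*} [Ring R] [Ring S] [Ring T] {ι : S →+* T}
    (hι : Function.Injective ι) {f : R →+* T} (h : ∀ x, f x ∈ ι.range) :
    ∃ g : R →+* S, ι.comp g = f := by
  let e := RingEquiv.ofBijective ι.rangeRestrict
    ⟨fun x y hxy => hι (congrArg Subtype.val hxy), ι.rangeRestrict_surjective⟩
  refine ⟨(e.symm : ι.range →+* S).comp (f.codRestrict ι.range h), RingHom.ext fun x => ?_⟩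
  exact congrArg Subtype.val (e.apply_symm_apply (f.codRestrict ι.range h x))

theorem exists_injective_ringHom_of_mem_range_matrix {n R S T : Type*} [Fintype n]
    [DecidableEq n] [Ring R] [Ring S] [Ring T] {ι : S →+* T} (hι : Function.Injective ι)
    {ρ : R →+* Matrix n n T} (hρ : Function.Injective ρ) (h : ∀ x, ρ x ∈ ι.range.matrix) :
    ∃ ρ' : R →+* Matrix n n S, Function.Injective ρ' ∧ ι.mapMatrix.comp ρ' = ρ := by
  obtain ⟨ρ', hρ'⟩ := exists_ringHom_comp_eq (f := ρ)
    (show Function.Injective (ι.mapMatrix (m := n)) from Matrix.map_injective hι)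
    fun x => (range_mapMatrix ι).ge (h x)
  exact ⟨ρ', .of_comp (f := ι.mapMatrix) (by rwa [← RingHom.coe_comp, hρ']), hρ'⟩

theorem exists_injective_monoidHom_GL {R S : Type*} [CommRing R] [CommRing S] {r : ℕ}
    {ρ : R →+* Matrix (Fin r) (Fin r) S} (hρ : Function.Injective ρ) {n : ℕ}
    (G : Subgroup (GL (Fin n) R)) :
    ∃ (m : ℕ) (f : G →* GL (Fin m) S), Function.Injective f := by
  let e : Matrix (Fin n) (Fin n) (Matrix (Fin r) (Fin r) S) ≃+*
      Matrix (Fin (n * r)) (Fin (n * r)) S :=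
    (compRingEquiv (Fin n) (Fin r) S).trans (reindexAlgEquiv S S finProdFinEquiv).toRingEquiv
  let F := e.toRingHom.comp ρ.mapMatrix
  have hF : Function.Injective F := e.injective.comp (Matrix.map_injective hρ)
  exact ⟨n * r, (Units.map F.toMonoidHom).comp G.subtype,
    (Units.map_injective (f := F.toMonoidHom) hF).comp G.subtype_injective⟩

open TensorProduct in
theorem exists_injective_matrix_algHom (A K R : Type*) [CommRing A] [IsDomain A] [Field K]
    [Algebra A K] [IsFractionRing A K] [CommRing R] [Algebra A R] [Module.Finite A R]
    [Module.IsTorsionFree A R] :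
    ∃ (r : ℕ) (ρ : R →ₐ[A] Matrix (Fin r) (Fin r) K), Function.Injective ρ := by
  have hι : Function.Injective (TensorProduct.mk A K R 1) := fun x y h => by
    obtain ⟨⟨c, hc⟩, h⟩ := (IsLocalizedModule.eq_iff_exists (nonZeroDivisors A) _).1 h
    exact smul_right_injective R (nonZeroDivisors.ne_zero hc) h
  let f := Algebra.leftMulMatrix (Module.finBasis K (K ⊗[A] R))
  have hf : Function.Injective f := Algebra.leftMulMatrix_injective _
  let g := f.restrictScalars A
  exact ⟨_, g.comp Algebra.TensorProduct.includeRight, hf.comp hι⟩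

theorem exists_smul_mem_range_matrix {A : Type*} (K : Type*) {R n : Type*} [CommRing A]
    [IsDomain A] [Field K] [Algebra A K] [IsFractionRing A K] [AddCommGroup R] [Module A R]
    [Module.Finite A R] [Fintype n] [DecidableEq n] (ρ : R →ₗ[A] Matrix n n K) :
    ∃ c : A, c ≠ 0 ∧ ∀ x, c • ρ x ∈ (algebraMap A K).range.matrix := by
  let N : Submodule A K := ⨆ ij : n × n, LinearMap.range (Matrix.entryLinearMap A K ij.1 ij.2 ∘ₗ ρ)
  have hN : N.FG := Submodule.fg_iSup _ fun ij => by
    rw [LinearMap.range_eq_map]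
    exact Module.Finite.fg_top.map _
  obtain ⟨c, hc, h⟩ := FractionalIdeal.isFractional_of_fg (S := nonZeroDivisors A) hN
  refine ⟨c, nonZeroDivisors.ne_zero hc, fun x i j => h _ ?_⟩
  exact Submodule.mem_iSup_of_mem (i, j) ⟨x, rfl⟩

theorem exists_matrix_ringHom_of_isUnit_map {A K B R n : Type*} [CommRing A] [Field K]
    [Algebra A K] [IsFractionRing A K] [CommRing B] [IsDomain B] [Ring R] [Fintype n]
    [DecidableEq n] {ρ : R →+* Matrix n n K} (hρ : Function.Injective ρ) {c : A}
    (h : ∀ x, c • ρ x ∈ (algebraMap A K).range.matrix) {η : A →+* B}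
    (hη : Function.Injective η) (hc : IsUnit (η c)) :
    ∃ ρ' : R →+* Matrix n n B, Function.Injective ρ' ∧ ∀ x, η c • ρ' x ∈ η.range.matrix := by
  obtain ⟨u, hu⟩ := hc
  let L := FractionRing B
  have hL : Function.Injective (algebraMap B L) := IsFractionRing.injective B L
  have hj : Function.Injective ((algebraMap B L).comp η) := hL.comp hη
  let κ : K →+* L := IsFractionRing.lift hj
  have hκ (a : A) : κ (algebraMap A K a) = algebraMap B L (η a) :=
    IsFractionRing.lift_algebraMap hj a
  have hκρ (x : R) (i j : n) :
      ∃ b : A, algebraMap B L (η b) = algebraMap B L (η c) * κ (ρ x i j) := by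
    obtain ⟨b, hb⟩ := h x i j
    exact ⟨b, by rw [← hκ, ← hκ, hb, ← map_mul, Matrix.smul_apply, Algebra.smul_def]⟩
  obtain ⟨ρ', hρ', hcomp⟩ := exists_injective_ringHom_of_mem_range_matrix hL
    (ρ := κ.mapMatrix.comp ρ) ((Matrix.map_injective κ.injective).comp hρ) fun x i j => by
      obtain ⟨b, hb⟩ := hκρ x i j
      refine ⟨↑u⁻¹ * η b, ?_⟩
      rw [map_mul, hb, ← mul_assoc, ← map_mul, ← hu, Units.inv_mul, map_one, one_mul]
      rfl
  refine ⟨ρ', hρ', fun x i j => ?_⟩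
  obtain ⟨b, hb⟩ := hκρ x i j
  refine ⟨b, hL ?_⟩
  rw [hb, Matrix.smul_apply, smul_eq_mul, map_mul]
  exact congrArg _ (congrFun₂ (DFunLike.congr_fun hcomp x) i j).symm

end MatrixEmbedding

section Lattice

variable {O K n R : Type*} [CommRing O] [Field K] [Algebra O K] [Fintype n] [DecidableEq n]

open ConjAct in
theorem exists_conj_mem_range_matrix [IsDomain O] [IsPrincipalIdealRing O] [IsFractionRing O K]
    (Λ : Submodule O (n → K)) [Λ.IsLattice K] :
    ∃ g : GL n K, ∀ M : Matrix n n K, (∀ v ∈ Λ, M *ᵥ v ∈ Λ) →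
      toConjAct g • M ∈ (algebraMap O K).range.matrix := by
  have : Module.IsTorsionFree O K := inferInstance
  have : Module.Free O Λ := Submodule.IsLattice.free K Λ
  let b : Module.Basis n O Λ := (Module.finBasisOfFinrankEq O Λ
    (Submodule.IsLattice.finrank_of_pi (K := K) Λ)).reindex (Fintype.equivFin n).symm
  let b' : Module.Basis n K (n → K) := b.extendOfIsLattice K
  let e := Pi.basisFun K n
  refine ⟨⟨b'.toMatrix e, e.toMatrix b', b'.toMatrix_mul_toMatrix_flip e,
    e.toMatrix_mul_toMatrix_flip b'⟩, fun M hM i j => ?_⟩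
  have hconj : b'.toMatrix e * M * e.toMatrix b' = LinearMap.toMatrix b' b' (toLin' M) := by
    simpa [e, LinearMap.toMatrix_eq_toMatrix'] using
      basis_toMatrix_mul_linearMap_toMatrix_mul_basis_toMatrix b' e b' e (toLin' M)
  have hrepr (v : Λ) : b'.repr v i = algebraMap O K (b.repr v i) := by
    have : ((b'.coord i).restrictScalars O).comp Λ.subtype =
        (Algebra.linearMap O K).comp (b.coord i) := b.ext fun k => by
      have h : (b k : n → K) = b' k := (Module.Basis.extendOfIsLattice_apply K b k).symm
      simp [h, Finsupp.single_apply, apply_ite]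
    exact DFunLike.congr_fun this v
  change (b'.toMatrix e * M * e.toMatrix b') i j ∈ _
  rw [hconj, LinearMap.toMatrix_apply, toLin'_apply, Module.Basis.extendOfIsLattice_apply]
  exact ⟨_, (hrepr ⟨_, hM _ (b j).2⟩).symm⟩

/-- The `O`-submodule of `Kⁿ` generated by the translates of `Oⁿ` under a representation `ρ`. -/
def orbitSpan (O : Type*) [CommRing O] [Algebra O K] [Ring R] (ρ : R →+* Matrix n n K) :
    Submodule O (n → K) :=
  ⨆ x, (LinearMap.range ((Algebra.linearMap O K).compLeft n)).map
    ((mulVecLin (ρ x)).restrictScalars O)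

variable [Ring R] (ρ : R →+* Matrix n n K)

theorem mulVec_mem_orbitSpan (x : R) {v : n → K} (hv : v ∈ orbitSpan O ρ) :
    ρ x *ᵥ v ∈ orbitSpan O ρ := by
  suffices h : (orbitSpan O ρ).map ((mulVecLin (ρ x)).restrictScalars O) ≤ orbitSpan O ρ from
    h ⟨v, hv, rfl⟩
  rw [orbitSpan, Submodule.map_iSup]
  refine iSup_le fun y => le_iSup_of_le (x * y) (le_of_eq ?_)
  rw [← Submodule.map_comp, map_mul, mulVecLin_mul]
  rfl

theorem range_compLeft_le_orbitSpan :
    LinearMap.range ((Algebra.linearMap O K).compLeft n) ≤ orbitSpan O ρ :=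
  le_iSup_of_le 1 fun v hv => ⟨v, hv, by simp⟩

variable {ρ}

theorem isLattice_orbitSpan [IsDomain O] [IsNoetherianRing O] [FaithfulSMul O K]
    {a : O} (ha : a ≠ 0) (h : ∀ x, a • ρ x ∈ (algebraMap O K).range.matrix) :
    (orbitSpan O ρ).IsLattice K where
  fg := by
    let f : (n → K) →ₗ[O] n → K := LinearMap.lsmul O (n → K) a
    have hf : Function.Injective f := by
      have : Module.IsTorsionFree O K := inferInstance
      exact smul_right_injective _ ha
    have hle : (orbitSpan O ρ).map f ≤ LinearMap.range ((Algebra.linearMap O K).compLeft n) := by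
      rw [orbitSpan, Submodule.map_iSup]
      refine iSup_le fun x => ?_
      rintro _ ⟨_, ⟨_, ⟨v, rfl⟩, rfl⟩, rfl⟩
      obtain ⟨N, hN⟩ := (range_mapMatrix _).ge (h x)
      refine ⟨N *ᵥ v, ?_⟩
      trans (a • ρ x) *ᵥ (algebraMap O K ∘ v)
      · rw [← hN]
        exact funext fun i => RingHom.map_mulVec (algebraMap O K) N v i
      · exact smul_mulVec ..
    exact Submodule.fg_of_fg_map_injective f hf
      (Submodule.FG.of_le (Module.Finite.iff_fg.1 inferInstance) hle)
  span_eq_top := by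
    rw [eq_top_iff, ← (Pi.basisFun K n).span_eq, Submodule.span_le]
    rintro _ ⟨i, rfl⟩
    refine Submodule.subset_span (range_compLeft_le_orbitSpan ρ ⟨Pi.single i 1, ?_⟩)
    ext j
    simp [Pi.single_apply, apply_ite]

open ConjAct in
theorem exists_conj_apply_mem_range_matrix [IsDomain O] [IsPrincipalIdealRing O]
    [IsFractionRing O K] {a : O} (ha : a ≠ 0)
    (h : ∀ x, a • ρ x ∈ (algebraMap O K).range.matrix) :
    ∃ g : GL n K, ∀ x, toConjAct g • ρ x ∈ (algebraMap O K).range.matrix := by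
  have := isLattice_orbitSpan ha h
  obtain ⟨g, hg⟩ := exists_conj_mem_range_matrix (orbitSpan O ρ)
  exact ⟨g, fun x => hg _ fun _ => mulVec_mem_orbitSpan ρ x⟩

end Lattice

section Coefficients

variable {σ O : Type*} [CommRing O]

instance isDomain_mvPowerSeries [IsDomain O] : IsDomain (MvPowerSeries σ O) :=
  NoZeroDivisors.to_isDomain _

theorem coeff_rescale_const (q : O) (f : MvPowerSeries σ O) (m : σ →₀ ℕ) :
    coeff m (rescale (fun _ => q) f) = q ^ m.degree * coeff m f := by
  rw [coeff_rescale, Finsupp.prod, Finset.prod_pow_eq_pow_sum, Finsupp.degree_apply]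

theorem rescale_const_injective [IsDomain O] {q : O} (hq : q ≠ 0) :
    Function.Injective (rescale fun _ : σ => q) := by
  refine fun f g h => MvPowerSeries.ext fun m => ?_
  have := congrArg (coeff m) h
  rw [coeff_rescale_const, coeff_rescale_const] at this
  exact mul_left_cancel₀ (pow_ne_zero _ hq) this

theorem exists_rescale_const_eq [Finite σ] (q : O) {n : ℕ} {f : MvPowerSeries σ O}
    (hn : n ≤ f.order) :
    ∃ h : MvPowerSeries σ O, rescale (fun _ => q) f =
      C q ^ n * ((truncTotal (n + 1) f).toMvPowerSeries + C q * h) := by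
  let h : MvPowerSeries σ O :=
    fun m => if m.degree ≤ n then 0 else q ^ (m.degree - n - 1) * coeff m f
  have hh (m : σ →₀ ℕ) :
      coeff m h = if m.degree ≤ n then 0 else q ^ (m.degree - n - 1) * coeff m f := rfl
  refine ⟨h, MvPowerSeries.ext fun m => ?_⟩
  rw [← map_pow, coeff_C_mul, map_add, coeff_C_mul, coeff_rescale_const, MvPolynomial.coeff_coe,
    coeff_truncTotal_eq_ite, hh]
  rcases lt_trichotomy m.degree n with hm | hm | hm
  · simp [coeff_of_lt_order (lt_of_lt_of_le (by exact_mod_cast hm) hn)]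
  · simp [hm]
  · rw [if_neg (by lia), if_neg (by lia), zero_add, ← mul_assoc, ← mul_assoc, ← pow_succ, ← pow_add]
    congr 2
    lia

theorem mvPowerSeries_map_injective {K : Type*} [CommRing K] {φ : O →+* K}
    (hφ : Function.Injective φ) : Function.Injective (MvPowerSeries.map (σ := σ) φ) :=
  fun _ _ h => MvPowerSeries.ext fun m => hφ (congrArg (coeff m) h)

theorem mem_range_mvPowerSeries_map_iff {K : Type*} [CommRing K] {φ : O →+* K}
    {f : MvPowerSeries σ K} :
    f ∈ (MvPowerSeries.map (σ := σ) φ).range ↔ ∀ m, coeff m f ∈ φ.range := by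
  refine ⟨?_, fun h => ?_⟩
  · rintro ⟨g, rfl⟩ m
    exact ⟨coeff m g, rfl⟩
  · choose g hg using h
    exact ⟨g, MvPowerSeries.ext hg⟩

theorem rescale_mem_range_map {K : Type*} [CommRing K] {φ : O →+* K} {q : O}
    {f : MvPowerSeries σ K} (h₀ : constantCoeff f ∈ φ.range)
    (h : C (φ q) * f ∈ (MvPowerSeries.map (σ := σ) φ).range) :
    rescale (fun _ => φ q) f ∈ (MvPowerSeries.map (σ := σ) φ).range := by
  refine mem_range_mvPowerSeries_map_iff.2 fun m => ?_
  rw [coeff_rescale_const]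
  by_cases hm : m = 0
  · simpa [hm] using h₀
  obtain ⟨k, hk⟩ := Nat.exists_eq_succ_of_ne_zero (mt (Finsupp.degree_eq_zero_iff m).1 hm)
  rw [hk, pow_succ, mul_assoc, ← coeff_C_mul, ← map_pow]
  exact mul_mem ⟨_, rfl⟩ (mem_range_mvPowerSeries_map_iff.1 h m)

end Coefficients

section Translate

variable {σ O : Type*} [CommRing O]

theorem hasEval_neg [TopologicalSpace O] [IsLinearTopology O O] {b : σ → O} (hb : HasEval b) :
    HasEval (-b) := by
  simpa using hb.mul_left (-1)

theorem hasEval_X_add_C [TopologicalSpace O] [IsTopologicalRing O] [IsLinearTopology O O]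
    {b : σ → O} (hb : HasEval b) : HasEval (fun i => X i + C (b i) : σ → MvPowerSeries σ O) :=
  HasEval.X.add (hb.map (φ := C) WithPiTopology.continuous_C)

variable [UniformSpace O] [IsUniformAddGroup O] [IsTopologicalRing O]
  [IsLinearTopology O O] [T2Space O] [CompleteSpace O] {b : σ → O}

/-- The substitution `t ↦ t + b`, for a topologically nilpotent family of constants `b`. -/
noncomputable def translateAlgHom (hb : HasEval b) : MvPowerSeries σ O →ₐ[O] MvPowerSeries σ O :=
  aeval (hasEval_X_add_C hb)

theorem translateAlgHom_coe (hb : HasEval b) (q : MvPolynomial σ O) :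
    translateAlgHom hb (q : MvPowerSeries σ O) = MvPolynomial.aeval (fun i => X i + C (b i)) q :=
  aeval_coe _ _

theorem translateAlgHom_X (hb : HasEval b) (i : σ) :
    translateAlgHom hb (X i) = X i + C (b i) := by
  rw [← MvPolynomial.coe_X, translateAlgHom_coe, MvPolynomial.aeval_X, MvPolynomial.coe_X]

theorem translateAlgHom_injective (hb : HasEval b) : Function.Injective (translateAlgHom hb) := by
  let τ := translateAlgHom (hasEval_neg hb)
  have hX (i : σ) : τ (X i + C (b i)) = X i := by
    rw [map_add, translateAlgHom_X, c_eq_algebraMap, AlgHom.commutes]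
    simp
  have hid : τ.comp (translateAlgHom hb) = AlgHom.id O (MvPowerSeries σ O) := by
    rw [translateAlgHom, comp_aeval _ (continuous_aeval _),
      ← aeval_unique (ε := AlgHom.id O (MvPowerSeries σ O)) continuous_id]
    congr! 2 with i
    exact hX i
  exact Function.LeftInverse.injective (g := τ) (DFunLike.congr_fun hid)

theorem constantCoeff_translateAlgHom_coe (hb : HasEval b) (q : MvPolynomial σ O) :
    constantCoeff (translateAlgHom hb (q : MvPowerSeries σ O)) = MvPolynomial.eval b q := by
  have h : constantCoeff.comp (MvPolynomial.aeval fun i => X i + C (b i) :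
      MvPolynomial σ O →ₐ[O] MvPowerSeries σ O).toRingHom = MvPolynomial.eval b :=
    MvPolynomial.ringHom_ext (by simp [← c_eq_algebraMap]) (by simp)
  rw [translateAlgHom_coe, ← h]
  rfl

end Translate

section Endomorphism

variable {σ O : Type*} [CommRing O]

theorem truncTotal_order_ne_zero [Finite σ] {f : MvPowerSeries σ O} (hf : f ≠ 0) :
    truncTotal (f.order.toNat + 1) f ≠ 0 := by
  obtain ⟨m, hm, hd⟩ := exists_coeff_ne_zero_and_order (ne_zero_iff_order_finite.1 hf)
  refine fun h => hm ?_
  have hlt : m.degree < f.order.toNat + 1 := by simp [← hd]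
  rw [← coeff_truncTotal f hlt, h, MvPolynomial.coeff_zero]

theorem toMvPowerSeries_truncTotal_one [Finite σ] (f : MvPowerSeries σ O) :
    (truncTotal 1 f).toMvPowerSeries = C (constantCoeff f) := by
  classical
  ext m
  rw [MvPolynomial.coeff_coe, coeff_truncTotal_eq_ite, coeff_C]
  have hm : m.degree < 1 ↔ m = 0 := Nat.lt_one_iff.trans (Finsupp.degree_eq_zero_iff m)
  exact ite_congr (propext hm) (fun h => by rw [h, coeff_zero_eq_constantCoeff_apply]) fun _ => rfl

theorem exists_eval_mul_ne_zero [IsDomain O] [Infinite O] {ϖ : O} (hϖ : ϖ ≠ 0)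
    {q : MvPolynomial σ O} (hq : q ≠ 0) :
    ∃ b : σ → O, MvPolynomial.eval (fun i => ϖ * b i) q ≠ 0 := by
  by_contra! h
  refine hq (MvPolynomial.funext_set (fun _ => Set.range (ϖ * ·))
    (fun _ => Set.infinite_range_of_injective (mul_right_injective₀ hϖ)) fun x hx => ?_)
  choose b hb using fun i => hx i trivial
  simpa [← funext hb] using h b

variable [UniformSpace O] [IsUniformAddGroup O] [IsTopologicalRing O] [IsLinearTopology O O]
  [T2Space O] [CompleteSpace O] {ϖ : O}

theorem isUnit_one_add_of_isTopologicallyNilpotent (hϖ : IsTopologicallyNilpotent ϖ) :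
    IsUnit (1 + ϖ) := by
  have h : IsUnit (1 + PowerSeries.X : PowerSeries O) :=
    PowerSeries.isUnit_iff_constantCoeff.2 (by simp)
  have hX : PowerSeries.aeval hϖ (PowerSeries.X : PowerSeries O) = ϖ := by
    rw [← Polynomial.coe_X, PowerSeries.aeval_coe, Polynomial.aeval_X]
  simpa [hX] using h.map (PowerSeries.aeval hϖ)

theorem associated_C_constantCoeff_rescale [Finite σ] (hϖ : IsTopologicallyNilpotent ϖ)
    (f : MvPowerSeries σ O) :
    Associated (C (constantCoeff f)) (rescale (fun _ => ϖ * constantCoeff f) f) := by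
  obtain ⟨h, hh⟩ := exists_rescale_const_eq (ϖ * constantCoeff f) (f := f) (n := 0) (by simp)
  have hunit : IsUnit (1 + C ϖ * h) := by
    rw [isUnit_iff_constantCoeff, map_add, map_one, map_mul, constantCoeff_C]
    exact isUnit_one_add_of_isTopologicallyNilpotent (hϖ.mul_right _)
  refine ⟨hunit.unit, ?_⟩
  rw [hh, pow_zero, one_mul, zero_add, toMvPowerSeries_truncTotal_one, hunit.unit_spec, map_mul]
  ring

variable [Finite σ] [IsDomain O] [Infinite O]

-- After `t ↦ ϖvt` and division by `(ϖv)ᵏ`, where `k` is the order of `f`, only the lowest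
-- homogeneous part of `f` survives modulo `ϖv`; its value `v` at `ϖb` is not zero.
theorem exists_injective_constantCoeff_ne_zero (hϖ₀ : ϖ ≠ 0) (hϖ : IsTopologicallyNilpotent ϖ)
    {f : MvPowerSeries σ O} (hf : f ≠ 0) :
    ∃ ψ : MvPowerSeries σ O →+* MvPowerSeries σ O,
      Function.Injective ψ ∧ constantCoeff (ψ f) ≠ 0 := by
  obtain ⟨b, hv⟩ := exists_eval_mul_ne_zero hϖ₀ (truncTotal_order_ne_zero hf)
  set v := MvPolynomial.eval (fun i => ϖ * b i) (truncTotal (f.order.toNat + 1) f)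
  have hb : HasEval fun i => ϖ * b i :=
    ⟨fun i => hϖ.mul_right (b i), by simp [Filter.cofinite_eq_bot]⟩
  let τ := translateAlgHom hb
  refine ⟨τ.toRingHom.comp (rescale fun _ => ϖ * v),
    (translateAlgHom_injective hb).comp (rescale_const_injective (mul_ne_zero hϖ₀ hv)), ?_⟩
  have hC (a : O) : constantCoeff (τ (C a)) = a := by
    rw [c_eq_algebraMap, AlgHom.commutes, ← c_eq_algebraMap, constantCoeff_C]
  obtain ⟨h, hh⟩ := exists_rescale_const_eq (ϖ * v) (ENat.natCast_toNat_le_self f.order)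
  have hψ : constantCoeff (τ (rescale (fun _ => ϖ * v) f)) =
      (ϖ * v) ^ f.order.toNat * (v * (1 + ϖ * constantCoeff (τ h))) := by
    rw [hh]
    simp only [map_mul, map_add, map_pow, hC, τ, constantCoeff_translateAlgHom_coe]
    ring
  refine hψ.trans_ne (mul_ne_zero (pow_ne_zero _ (mul_ne_zero hϖ₀ hv)) (mul_ne_zero hv ?_))
  exact (isUnit_one_add_of_isTopologicallyNilpotent (hϖ.mul_right _)).ne_zero

theorem exists_injective_associated_C (hϖ₀ : ϖ ≠ 0) (hϖ : IsTopologicallyNilpotent ϖ)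
    {f : MvPowerSeries σ O} (hf : f ≠ 0) :
    ∃ ψ : MvPowerSeries σ O →+* MvPowerSeries σ O,
      Function.Injective ψ ∧ ∃ a : O, a ≠ 0 ∧ Associated (C a) (ψ f) := by
  obtain ⟨ψ, hψ, ha⟩ := exists_injective_constantCoeff_ne_zero hϖ₀ hϖ hf
  exact ⟨(rescale fun _ => ϖ * constantCoeff (ψ f)).comp ψ,
    (rescale_const_injective (mul_ne_zero hϖ₀ ha)).comp hψ, _, ha,
    associated_C_constantCoeff_rescale hϖ (ψ f)⟩

end Endomorphism

section Denominators

variable {σ O K n R : Type*} [CommRing O] [Field K] [Algebra O K] [Fintype n] [DecidableEq n]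
  [Ring R]

theorem exists_C_smul_map_C_mem_range_matrix [IsDomain O] [IsFractionRing O K]
    (N : Matrix n n K) : ∃ b : O, b ≠ 0 ∧ (C (algebraMap O K b) : MvPowerSeries σ K) • N.map C ∈
      (MvPowerSeries.map (σ := σ) (algebraMap O K)).range.matrix := by
  obtain ⟨b, hb, h⟩ := exists_smul_mem_range_matrix K (LinearMap.toSpanSingleton O _ N)
  refine ⟨b, hb, fun i j => ?_⟩
  obtain ⟨z, hz⟩ := h 1 i j
  refine ⟨C z, ?_⟩
  simp [map_C, hz, Algebra.smul_def]

open ConjAct in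
theorem exists_ringHom_constantCoeff_mem_range [IsDomain O] [IsPrincipalIdealRing O]
    [IsFractionRing O K] {ρ : R →+* Matrix n n (MvPowerSeries σ K)} (hρ : Function.Injective ρ)
    {a : O} (ha : a ≠ 0) (h : ∀ x, (C (algebraMap O K a) : MvPowerSeries σ K) • ρ x ∈
      (MvPowerSeries.map (σ := σ) (algebraMap O K)).range.matrix) :
    ∃ ρ' : R →+* Matrix n n (MvPowerSeries σ K), Function.Injective ρ' ∧
      (∀ x, constantCoeff.mapMatrix (ρ' x) ∈ (algebraMap O K).range.matrix) ∧
      ∃ b : O, b ≠ 0 ∧ ∀ x, (C (algebraMap O K b) : MvPowerSeries σ K) • ρ' x ∈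
        (MvPowerSeries.map (σ := σ) (algebraMap O K)).range.matrix := by
  have hconst (x : R) :
      a • (constantCoeff.mapMatrix.comp ρ) x ∈ (algebraMap O K).range.matrix := fun i j => by
    obtain ⟨z, hz⟩ := h x i j
    refine ⟨constantCoeff z, ?_⟩
    simpa [Algebra.smul_def] using congrArg constantCoeff hz
  obtain ⟨g, hg⟩ := exists_conj_apply_mem_range_matrix ha hconst
  obtain ⟨b, hb, hbg⟩ := exists_C_smul_map_C_mem_range_matrix (O := O) (σ := σ) g.val
  obtain ⟨b', hb', hbg'⟩ := exists_C_smul_map_C_mem_range_matrix (O := O) (σ := σ) g⁻¹.val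
  let G : GL n (MvPowerSeries σ K) := GeneralLinearGroup.map C g
  have hC (N : Matrix n n K) : constantCoeff.mapMatrix (N.map (C (σ := σ))) = N := by ext; simp
  refine ⟨(MulSemiringAction.toRingHom (ConjAct _) _ (toConjAct G)).comp ρ,
    (MulAction.injective (toConjAct G)).comp hρ, fun x => ?_, b * a * b',
    mul_ne_zero (mul_ne_zero hb ha) hb', fun x => ?_⟩
  · convert hg x using 1
    change constantCoeff.mapMatrix (g.val.map C * ρ x * g⁻¹.val.map C) =
      g.val * constantCoeff.mapMatrix (ρ x) * g⁻¹.val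
    rw [map_mul, map_mul, hC, hC]
  · convert mul_mem (mul_mem hbg (h x)) hbg' using 1
    change _ • (G.val * ρ x * G⁻¹.val) = _ • G.val * _ * _ • G⁻¹.val
    rw [smul_mul_smul_comm, smul_mul_smul_comm, map_mul, map_mul, map_mul, map_mul]

theorem exists_ringHom_matrix_of_constantCoeff_mem_range [FaithfulSMul O K]
    {ρ : R →+* Matrix n n (MvPowerSeries σ K)} (hρ : Function.Injective ρ) {b : O} (hb : b ≠ 0)
    (h₀ : ∀ x, constantCoeff.mapMatrix (ρ x) ∈ (algebraMap O K).range.matrix)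
    (h : ∀ x, (C (algebraMap O K b) : MvPowerSeries σ K) • ρ x ∈
      (MvPowerSeries.map (σ := σ) (algebraMap O K)).range.matrix) :
    ∃ ρ' : R →+* Matrix n n (MvPowerSeries σ O), Function.Injective ρ' := by
  let s : MvPowerSeries σ K →+* MvPowerSeries σ K := rescale fun _ => algebraMap O K b
  have hs : Function.Injective (s.mapMatrix (m := n)) :=
    Matrix.map_injective (rescale_const_injective (by simpa using hb))
  obtain ⟨ρ', hρ', -⟩ := exists_injective_ringHom_of_mem_range_matrix
    (mvPowerSeries_map_injective (σ := σ) (FaithfulSMul.algebraMap_injective O K))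
    (ρ := s.mapMatrix.comp ρ) (hs.comp hρ) fun x i j => rescale_mem_range_map (h₀ x i j) (h x i j)
  exact ⟨ρ', hρ'⟩

end Denominators

section Embedding

variable {σ O : Type*} [Finite σ] [CommRing O] [IsDomain O] [Infinite O] [UniformSpace O]
  [IsUniformAddGroup O] [IsTopologicalRing O] [IsLinearTopology O O] [T2Space O] [CompleteSpace O]
  {ϖ : O}

theorem exists_injective_matrix_mvPowerSeries_fractionRing (hϖ₀ : ϖ ≠ 0)
    (hϖ : IsTopologicallyNilpotent ϖ) (K R : Type*) [Field K] [Algebra O K] [FaithfulSMul O K]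
    [CommRing R] [Algebra (MvPowerSeries σ O) R] [Module.Finite (MvPowerSeries σ O) R]
    [Module.IsTorsionFree (MvPowerSeries σ O) R] :
    ∃ (r : ℕ) (ρ : R →+* Matrix (Fin r) (Fin r) (MvPowerSeries σ K)), Function.Injective ρ ∧
      ∃ a : O, a ≠ 0 ∧ ∀ x, (C (algebraMap O K a) : MvPowerSeries σ K) • ρ x ∈
        (MvPowerSeries.map (σ := σ) (algebraMap O K)).range.matrix := by
  let κ : MvPowerSeries σ O →+* MvPowerSeries σ K := MvPowerSeries.map (algebraMap O K)
  have hinj : Function.Injective (algebraMap O K) := FaithfulSMul.algebraMap_injective O K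
  obtain ⟨r, ρ, hρ⟩ := exists_injective_matrix_algHom (MvPowerSeries σ O)
    (FractionRing (MvPowerSeries σ O)) R
  obtain ⟨c, hc, hcρ⟩ := exists_smul_mem_range_matrix _ ρ.toLinearMap
  obtain ⟨ψ, hψ, a, ha, u, hu⟩ := exists_injective_associated_C hϖ₀ hϖ hc
  have hκψ : κ (ψ c) = C (algebraMap O K a) * κ u := by rw [← hu, map_mul, map_C]
  have hunit : IsUnit (κ (ψ c)) := by
    rw [hκψ]
    exact (((IsUnit.mk0 _ ((map_ne_zero_iff _ hinj).2 ha)).map C).mul (u.isUnit.map κ))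
  obtain ⟨ρ', hρ', hrange⟩ := exists_matrix_ringHom_of_isUnit_map (ρ := ρ.toRingHom) hρ hcρ
    (η := κ.comp ψ) ((mvPowerSeries_map_injective hinj).comp hψ) hunit
  refine ⟨r, ρ', hρ', a, ha, fun x i j => ?_⟩
  obtain ⟨b, hb⟩ := (hrange x) i j
  have hu' : κ ↑u⁻¹ * κ u = 1 := by rw [← map_mul, Units.inv_mul, map_one]
  refine ⟨↑u⁻¹ * ψ b, ?_⟩
  calc κ (↑u⁻¹ * ψ b) = κ ↑u⁻¹ * (κ (ψ c) * ρ' x i j) := (map_mul _ _ _).trans (congrArg _ hb)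
    _ = C (algebraMap O K a) * ρ' x i j := by
      rw [hκψ]
      linear_combination C (algebraMap O K a) * ρ' x i j * hu'

theorem exists_injective_matrix_mvPowerSeries [IsPrincipalIdealRing O] (hϖ₀ : ϖ ≠ 0)
    (hϖ : IsTopologicallyNilpotent ϖ) (R : Type*) [CommRing R] [Algebra (MvPowerSeries σ O) R]
    [Module.Finite (MvPowerSeries σ O) R] [Module.IsTorsionFree (MvPowerSeries σ O) R] :
    ∃ (r : ℕ) (ρ : R →+* Matrix (Fin r) (Fin r) (MvPowerSeries σ O)), Function.Injective ρ := by
  obtain ⟨r, ρ, hρ, a, ha, h⟩ :=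
    exists_injective_matrix_mvPowerSeries_fractionRing (σ := σ) hϖ₀ hϖ (FractionRing O) R
  obtain ⟨ρ', hρ', h₀, b, hb, hbρ⟩ := exists_ringHom_constantCoeff_mem_range hρ ha h
  exact ⟨r, exists_ringHom_matrix_of_constantCoeff_mem_range hρ' hb h₀ hbρ⟩

end Embedding

section Dimension

theorem ringKrullDim_powerSeries (R : Type*) [CommRing R] [IsNoetherianRing R] :
    ringKrullDim (PowerSeries R) = ringKrullDim R + 1 := by
  have hX : (PowerSeries.X : PowerSeries R) ∈ Ring.jacobson (PowerSeries R) := by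
    rw [← Ideal.jacobson_bot, Ideal.mem_jacobson_bot]
    exact fun f => PowerSeries.isUnit_iff_constantCoeff.2 (by simp)
  have hreg : IsSMulRegular (PowerSeries R) (PowerSeries.X : PowerSeries R) :=
    fun f g h => PowerSeries.X_mul_inj.1 h
  have hker : RingHom.ker (PowerSeries.constantCoeff (R := R)) = Ideal.span {PowerSeries.X} :=
    Ideal.ext fun f => by rw [RingHom.mem_ker, Ideal.mem_span_singleton, PowerSeries.X_dvd_iff]
  rw [← ringKrullDim_quotient_span_singleton_succ_eq_ringKrullDim_of_mem_jacobson hreg hX, ← hker,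
    ringKrullDim_eq_of_ringEquiv
      (RingHom.quotientKerEquivOfSurjective PowerSeries.constantCoeff_surj)]

theorem ringKrullDim_mvPowerSeries_fin (R : Type*) [CommRing R] [IsNoetherianRing R] (d : ℕ) :
    ringKrullDim (MvPowerSeries (Fin d) R) = ringKrullDim R + d := by
  induction d with
  | zero =>
    rw [ringKrullDim_eq_of_ringEquiv (MvPowerSeries.isEmptyEquiv (σ := Fin 0) (R := R)).toRingEquiv]
    simp
  | succ d ih =>
    rw [ringKrullDim_eq_of_ringEquiv (MvPowerSeries.finSuccEquiv R d).toRingEquiv,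
      ringKrullDim_powerSeries, ih, Nat.cast_succ, add_assoc]

theorem ringKrullDim_le_of_isIntegral (A R : Type*) [CommRing A] [CommRing R] [Algebra A R]
    [Algebra.IsIntegral A R] : ringKrullDim R ≤ ringKrullDim A :=
  Order.krullDim_le_of_strictMono (PrimeSpectrum.comap (algebraMap A R)) fun _ _ h =>
    Ideal.IsIntegral.comap_lt_comap (R := A) h

theorem injective_of_finite_of_ringKrullDim_le {A R : Type*} [CommRing A] [IsDomain A]
    [CommRing R] {θ : A →+* R} (hθ : θ.Finite) {d : ℕ} (hA : ringKrullDim A ≤ d)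
    (hR : d ≤ ringKrullDim R) : Function.Injective θ := by
  rw [injective_iff_map_eq_zero]
  intro a ha
  by_contra ha₀
  have hrange : Module.Finite θ.range R :=
    RingHom.Finite.of_comp_finite (f := θ.rangeRestrict) (g := θ.range.subtype) hθ
  have hlt : ringKrullDim θ.range + 1 ≤ d :=
    (ringKrullDim_succ_le_of_surjective θ.rangeRestrict θ.rangeRestrict_surjective
      (mem_nonZeroDivisors_of_ne_zero ha₀) (Subtype.ext ha)).trans hA
  exact (ENat.WithBot.add_one_le_natCast_iff.1 hlt).not_ge
    (hR.trans (ringKrullDim_le_of_isIntegral θ.range R))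

end Dimension

section SystemOfParameters

open IsLocalRing

theorem exists_fin_radical_span_range_eq_maximalIdeal {S : Type*} [CommRing S] [IsNoetherianRing S]
    [IsLocalRing S] {n : ℕ} (h : ringKrullDim S = n) :
    ∃ x : Fin n → S, (Ideal.span (Set.range x)).radical = maximalIdeal S := by
  obtain ⟨s, hs, hcard⟩ := Ideal.exists_finset_card_eq_height_of_isNoetherianRing (maximalIdeal S)
  rw [← maximalIdeal_height_eq_ringKrullDim, ← hcard] at h
  have hn : s.card = n := by exact_mod_cast h
  refine ⟨Subtype.val ∘ (s.equivFinOfCardEq hn).symm, le_antisymm ?_ ?_⟩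
  · rw [EquivLike.range_comp, Subtype.range_val]
    exact hs.1.1.radical_le_iff.2 hs.1.2
  · rw [EquivLike.range_comp, Subtype.range_val, Ideal.radical_eq_sInf]
    exact le_sInf fun P hP => hs.2 ⟨hP.2, hP.1⟩ (le_maximalIdeal hP.2.ne_top)

theorem exists_fin_radical_span_sup_eq_maximalIdeal {R : Type*} [CommRing R] [IsNoetherianRing R]
    [IsLocalRing R] {d : ℕ} (hdim : ringKrullDim R = (d + 1 : ℕ)) {y : R}
    (hy : y ∈ nonZeroDivisors R) (hm : y ∈ maximalIdeal R) :
    ∃ x : Fin d → R, (Ideal.span (Set.range x) ⊔ Ideal.span {y}).radical = maximalIdeal R := by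
  let π := Ideal.Quotient.mk (Ideal.span {y})
  have hπ : Function.Surjective π := Ideal.Quotient.mk_surjective
  have : Nontrivial (R ⧸ Ideal.span {y}) := Ideal.Quotient.nontrivial_iff.2 <|
    Ideal.span_singleton_ne_top ((mem_maximalIdeal y).1 hm)
  have : IsLocalRing (R ⧸ Ideal.span {y}) := .of_surjective' π hπ
  have : IsLocalHom π := .of_surjective π hπ
  have hquot : ringKrullDim (R ⧸ Ideal.span {y}) = d := by
    have h := ringKrullDim_quotient_span_singleton_succ_eq_ringKrullDim_of_mem_nonZeroDivisors hy hm
    rw [hdim, Nat.cast_succ] at h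
    exact ENat.WithBot.add_one_cancel.1 h
  obtain ⟨x, hx⟩ := exists_fin_radical_span_range_eq_maximalIdeal hquot
  choose l hl using fun i => hπ (x i)
  have hmap : (Ideal.span (Set.range l)).map π = Ideal.span (Set.range x) := by
    rw [Ideal.map_span, ← Set.range_comp, ← funext hl]
    rfl
  refine ⟨l, ?_⟩
  rw [← maximalIdeal_comap π, ← hx, ← hmap, Ideal.comap_radical,
    Ideal.comap_map_of_surjective' π hπ, Ideal.mk_ker]

end SystemOfParameters

section Finiteness

variable {A : Type*} [CommRing A] [TopologicalSpace A] [CompactSpace A]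

theorem isPrecomplete_of_compactSpace (I : Ideal A) (M : Type*) [AddCommGroup M] [Module A M]
    [IsNoetherian A M] [TopologicalSpace M] [T2Space M] [IsTopologicalAddGroup M]
    [ContinuousSMul A M] : IsPrecomplete I M where
  prec' f hf := by
    let N (n : ℕ) : Submodule A M := I ^ n • ⊤
    let t (n : ℕ) : Set M := {x | x - f n ∈ N n}
    have ht (n : ℕ) : IsCompact (t n) := by
      have hN : IsCompact (N n : Set M) := Submodule.isCompact_of_fg (IsNoetherian.noetherian _)
      exact (Homeomorph.subRight (f n)).isCompact_preimage.2 hN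
    have hanti (n : ℕ) : t (n + 1) ⊆ t n := fun x hx => by
      have hle : N (n + 1) ≤ N n := Submodule.smul_mono_left (Ideal.pow_le_pow_right n.le_succ)
      simpa [t] using add_mem (hle hx) (SModEq.sub_mem.1 (hf n.le_succ).symm)
    obtain ⟨x, hx⟩ := IsCompact.nonempty_iInter_of_sequence_nonempty_isCompact_isClosed t hanti
      (fun n => ⟨f n, by simp [t]⟩) (ht 0) fun n => (ht n).isClosed
    exact ⟨x, fun n => (SModEq.sub_mem.2 (Set.mem_iInter.1 hx n)).symm⟩

variable [T2Space A] [IsTopologicalRing A] [IsNoetherianRing A]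

theorem finite_of_finite_quotient_smul_top (I : Ideal A) (M : Type*) [AddCommGroup M] [Module A M]
    [IsHausdorff I M] [Module.Finite A (M ⧸ (I • ⊤ : Submodule A M))] : Module.Finite A M := by
  obtain ⟨n, g, hg⟩ := Module.Finite.exists_fin' A (M ⧸ (I • ⊤ : Submodule A M))
  obtain ⟨f, hf⟩ := Module.projective_lifting_property (Submodule.mkQ (I • ⊤)) g
    (Submodule.mkQ_surjective _)
  have := isPrecomplete_of_compactSpace I (Fin n → A)
  exact .of_surjective f (surjective_of_mkQ_comp_surjective (I := I) (hf ▸ hg))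

open IsLocalRing in
theorem finite_of_radical_map_eq_maximalIdeal {R : Type*} [CommRing R] [IsNoetherianRing R]
    [IsLocalRing R] [Finite (ResidueField R)] {I : Ideal A} {θ : A →+* R}
    (hI : (I.map θ).radical = maximalIdeal R) : θ.Finite := by
  algebraize [θ]
  have hle : I.map θ ≤ maximalIdeal R := hI ▸ Ideal.le_radical
  have hne : I.map θ ≠ ⊤ := fun h => (maximalIdeal.isMaximal R).ne_top (top_le_iff.1 (h ▸ hle))
  have : IsHausdorff I R := IsHausdorff.map_algebraMap_iff.1 (IsHausdorff.of_isLocalRing _ _ hne)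
  obtain ⟨k, hk⟩ := Ideal.exists_pow_le_of_le_radical_of_fg hI.ge (IsNoetherian.noetherian _)
  have : Finite (R ⧸ maximalIdeal R) := inferInstanceAs (Finite (ResidueField R))
  have := Ideal.finite_quotient_pow (IsNoetherian.noetherian (maximalIdeal R)) k
  have : Finite (R ⧸ I.map θ) := .of_surjective _ (Ideal.Quotient.factor_surjective hk)
  have : Finite (R ⧸ (I • ⊤ : Submodule A R)) := by
    rw [Ideal.smul_top_eq_map]
    exact this
  exact finite_of_finite_quotient_smul_top I R

end Finiteness

section PadicInt

variable (p : ℕ) [Fact p.Prime]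

theorem isAdic_span_padicInt : IsAdic (Ideal.span {(p : ℤ_[p])}) := by
  have hball (n : ℕ) : ((Ideal.span {(p : ℤ_[p])} ^ n : Ideal ℤ_[p]) : Set ℤ_[p]) =
      Metric.closedBall 0 ((p : ℝ)⁻¹ ^ n) := by
    ext x
    simp [Ideal.span_singleton_pow, ← PadicInt.norm_le_pow_iff_mem_span_pow]
  have hp : (1 : ℝ) < p := by exact_mod_cast (Fact.out : p.Prime).one_lt
  refine isAdic_iff.2 ⟨fun n => ?_, fun s hs => ?_⟩
  · rw [hball]
    exact IsUltrametricDist.isOpen_closedBall 0 (by positivity)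
  · obtain ⟨n, -, hn⟩ := (Metric.nhds_basis_closedBall_pow (by positivity)
      (inv_lt_one_of_one_lt₀ hp)).mem_iff.1 hs
    exact ⟨n, (hball n).trans_subset hn⟩

instance isLinearTopology_padicInt : IsLinearTopology ℤ_[p] ℤ_[p] := by
  rw [isAdic_span_padicInt p]
  exact Ideal.isLinearTopology _

variable {p}

theorem exists_padicInt_ringHom {R : Type*} [CommRing R] (I : Ideal R) [IsAdicComplete I R]
    (hp : (p : R) ∈ I) : Nonempty (ℤ_[p] →+* R) := by
  have hz (n : ℕ) : ((p ^ n : ℕ) : R ⧸ I ^ n) = 0 := by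
    rw [← map_natCast (Ideal.Quotient.mk (I ^ n)), Ideal.Quotient.eq_zero_iff_mem, Nat.cast_pow]
    exact Ideal.pow_mem_pow hp n
  let g (n : ℕ) : ZMod (p ^ n) →+* R ⧸ I ^ n :=
    ZMod.castHom (m := ringChar (R ⧸ I ^ n)) (ringChar.dvd (hz n)) _
  refine ⟨IsAdicComplete.liftRingHom I (fun n => (g n).comp (PadicInt.toZModPow n)) ?_⟩
  intro m n hle
  rw [← PadicInt.zmod_cast_comp_toZModPow m n hle, ← RingHom.comp_assoc, ← RingHom.comp_assoc]
  exact congrArg (RingHom.comp · _) (Subsingleton.elim _ _)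

theorem continuous_of_map_le_of_isAdic {A R : Type*} [CommRing A] [TopologicalSpace A]
    [IsTopologicalAddGroup A] [CommRing R] [TopologicalSpace R] [IsTopologicalAddGroup R]
    {J : Ideal A} {I : Ideal R} (hJ : IsAdic J) (hI : IsAdic I) {φ : A →+* R} (h : J.map φ ≤ I) :
    Continuous φ := by
  refine continuous_of_continuousAt_zero φ ?_
  rw [ContinuousAt, map_zero, hJ.hasBasis_nhds_zero.tendsto_iff hI.hasBasis_nhds_zero]
  refine fun n _ => ⟨n, trivial, fun x hx => ?_⟩
  exact Ideal.pow_right_mono h n (Ideal.map_pow φ J n ▸ Ideal.mem_map_of_mem φ hx)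

theorem exists_mvPowerSeries_padicInt_ringHom {R σ : Type*} [Finite σ] [CommRing R] {I : Ideal R}
    [IsAdicComplete I R] (hp : (p : R) ∈ I) {x : σ → R} (hx : ∀ i, x i ∈ I) :
    ∃ θ : MvPowerSeries σ ℤ_[p] →+* R, ∀ i, θ (MvPowerSeries.X i) = x i := by
  obtain ⟨φ⟩ := exists_padicInt_ringHom I hp
  let : WithIdeal R := ⟨I⟩
  have hI : IsAdic I := rfl
  obtain ⟨hcomplete, hT2⟩ := hI.isAdicComplete_iff.1 inferInstance
  have hφ : Continuous φ := by
    refine continuous_of_map_le_of_isAdic (isAdic_span_padicInt p) hI ?_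
    rwa [Ideal.map_span, Set.image_singleton, map_natCast, Ideal.span_singleton_le_iff_mem]
  have hE : MvPowerSeries.HasEval x :=
    ⟨fun i => WithIdeal.isTopologicallyNilpotent_of_mem (hx i), by simp [Filter.cofinite_eq_bot]⟩
  refine ⟨MvPowerSeries.eval₂Hom hφ hE, fun i => ?_⟩
  rw [MvPowerSeries.coe_eval₂Hom, MvPowerSeries.eval₂_X]

theorem ringKrullDim_mvPowerSeries_padicInt (d : ℕ) :
    ringKrullDim (MvPowerSeries (Fin d) ℤ_[p]) = (d + 1 : ℕ) := by
  rw [ringKrullDim_mvPowerSeries_fin, IsDiscreteValuationRing.ringKrullDim_eq_one, add_comm]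
  norm_cast

open IsLocalRing in
theorem exists_finite_injective_mvPowerSeries_padicInt {R : Type*} [CommRing R]
    [IsNoetherianRing R] [IsLocalRing R] [IsAdicComplete (maximalIdeal R) R]
    [Finite (ResidueField R)] (hp : (p : R) ∈ nonZeroDivisors R)
    (hp' : (p : R) ∈ maximalIdeal R) {d : ℕ} (hdim : ringKrullDim R = (d + 1 : ℕ)) :
    ∃ θ : MvPowerSeries (Fin d) ℤ_[p] →+* R, θ.Finite ∧ Function.Injective θ := by
  have : CompactSpace (MvPowerSeries (Fin d) ℤ_[p]) :=
    inferInstanceAs (CompactSpace ((Fin d →₀ ℕ) → ℤ_[p]))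
  obtain ⟨x, hx⟩ := exists_fin_radical_span_sup_eq_maximalIdeal hdim hp hp'
  have hxm (i : Fin d) : x i ∈ maximalIdeal R :=
    hx ▸ Ideal.le_radical (Ideal.mem_sup_left (Ideal.subset_span ⟨i, rfl⟩))
  obtain ⟨θ, hθ⟩ := exists_mvPowerSeries_padicInt_ringHom hp' hxm
  let I : Ideal (MvPowerSeries (Fin d) ℤ_[p]) :=
    Ideal.span (Set.range X) ⊔ Ideal.span {(p : MvPowerSeries (Fin d) ℤ_[p])}
  have hmap : I.map θ = Ideal.span (Set.range x) ⊔ Ideal.span {(p : R)} := by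
    rw [Ideal.map_sup, Ideal.map_span, Ideal.map_span, Set.image_singleton, map_natCast,
      ← Set.range_comp, ← funext hθ]
    rfl
  have hfin : θ.Finite := finite_of_radical_map_eq_maximalIdeal (I := I) (hmap ▸ hx)
  exact ⟨θ, hfin, injective_of_finite_of_ringKrullDim_le hfin
    (ringKrullDim_mvPowerSeries_padicInt d).le hdim.ge⟩

end PadicInt

/-- Let `R` be a commutative Noetherian local pro-`p` domain of
characteristic zero with Krull dimension `d + 1`. Then every subgroup of `GL_n(R)` embeds
into `GL_m(ℤ_p⟦t₁, …, t_d⟧)` for some `m`. -/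
theorem linear_over_padic_power_series (p : ℕ) [Fact p.Prime]
    (R : Type) [CommRing R] [IsDomain R] [IsNoetherianRing R] [IsLocalRing R]
    [IsAdicComplete (IsLocalRing.maximalIdeal R) R]
    [Finite (IsLocalRing.ResidueField R)] [CharP (IsLocalRing.ResidueField R) p]
    [CharZero R]
    (d : ℕ) (hdim : ringKrullDim R = (d + 1 : ℕ))
    (n : ℕ) (G : Subgroup (Matrix.GeneralLinearGroup (Fin n) R)) :
    ∃ (m : ℕ)
      (f : G →* Matrix.GeneralLinearGroup (Fin m) (MvPowerSeries (Fin d) (PadicInt p))),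
      Function.Injective f := by
  have hp : (p : R) ≠ 0 := Nat.cast_ne_zero.2 (Fact.out : p.Prime).ne_zero
  have hp' : (p : R) ∈ IsLocalRing.maximalIdeal R := by
    rw [← IsLocalRing.residue_eq_zero_iff, map_natCast, CharP.cast_eq_zero]
  obtain ⟨θ, hfin, hinj⟩ := exists_finite_injective_mvPowerSeries_padicInt
    (mem_nonZeroDivisors_of_ne_zero hp) hp' hdim
  algebraize [θ]
  have : Module.IsTorsionFree (MvPowerSeries (Fin d) ℤ_[p]) R :=
    Module.isTorsionFree_iff_algebraMap_injective.2 hinj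
  have hnil : IsTopologicallyNilpotent (p : ℤ_[p]) :=
    tendsto_pow_atTop_nhds_zero_of_norm_lt_one Padic.norm_p_lt_one
  obtain ⟨r, ρ, hρ⟩ := exists_injective_matrix_mvPowerSeries (σ := Fin d)
    (Nat.cast_ne_zero.2 (Fact.out : p.Prime).ne_zero) hnil R
  exact exists_injective_monoidHom_GL hρ G
end

section
/- Let p be a prime and let S be a commutative Noetherian local pro-p domain of characteristic zero with Krull dimension strictly greater than 2. Then there exists an injective ring homomorphism from ℤ_p⟦s₁, s₂⟧, the power series ring in two variables over the p-adic integers, into S. -/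
/-!
Since `p` lies in the maximal ideal, cutting `S` by `p` lowers the dimension by at most one, so
`dim S > n` yields a chain of primes `0 = P₀ < P₁ < ⋯ < Pₙ₊₁` of `S` with `p ∈ P₁`. As `S` is
complete, there is a ring homomorphism `φ : ℤ_p⟦X₁, …, Xₙ⟧ → S` sending each `Xᵢ` to an element of
`Pᵢ₊₁ \ Pᵢ`. Consecutive primes of the chain are separated by the image of `φ` (the first two by
`p ≠ 0`), so they contract to a chain of `n + 2` distinct primes of `ℤ_p⟦X₁, …, Xₙ⟧`, which has
dimension at most `n + 1`. Hence the smallest of them, `ker φ`, is zero.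
-/

section KrullDimension

theorem apply_zero_eq_bot_of_krullDim_le {α : Type*} [PartialOrder α] [OrderBot α] {n : ℕ}
    {P : Fin (n + 1) → α} (hP : StrictMono P) (hα : Order.krullDim α ≤ n) : P 0 = ⊥ := by
  by_contra hne
  have hlonger : StrictMono (Matrix.vecCons ⊥ P) := hP.vecCons (bot_lt_iff_ne_bot.2 hne)
  have hlen : ((n + 1 : ℕ) : WithBot ℕ∞) ≤ n :=
    (Order.LTSeries.length_le_krullDim (LTSeries.mk (n + 1) _ hlonger)).trans hα
  exact absurd (Nat.cast_le.1 hlen) n.not_succ_le_self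

theorem comap_eq_bot_of_separates_chain {A S : Type*} [CommRing A] [IsDomain A] [CommRing S]
    (φ : A →+* S) {n : ℕ} {P : Fin (n + 1) → PrimeSpectrum S} (hP : Monotone P)
    (hsep : ∀ i : Fin n, ∃ a, φ a ∈ (P i.succ).asIdeal ∧ φ a ∉ (P i.castSucc).asIdeal)
    (hA : ringKrullDim A ≤ n) : (P 0).asIdeal.comap φ = ⊥ := by
  have hmono : StrictMono fun i ↦ PrimeSpectrum.comap φ (P i) := by
    refine Fin.strictMono_iff_lt_succ.2 fun i ↦ ?_
    obtain ⟨a, ha_mem, ha_notMem⟩ := hsep i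
    exact lt_of_le_not_ge (Ideal.comap_mono (hP i.castSucc_le_succ)) fun h ↦ ha_notMem (h ha_mem)
  exact congrArg PrimeSpectrum.asIdeal (apply_zero_eq_bot_of_krullDim_le hmono hA)

theorem exists_strictMono_primeSpectrum_bot_mem {S : Type*} [CommRing S] [IsDomain S]
    [IsNoetherianRing S] {q : S} (hq : q ∈ Ring.jacobson S) (hq0 : q ≠ 0) {n : ℕ}
    (hS : n < ringKrullDim S) :
    ∃ P : Fin (n + 2) → PrimeSpectrum S, StrictMono P ∧ P 0 = ⊥ ∧ q ∈ (P 1).asIdeal := by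
  have hdim : ringKrullDim S ≤ ringKrullDim (S ⧸ Ideal.span {q}) + 1 := by
    simpa using ringKrullDim_le_ringKrullDim_quotient_add_encard {q} (by simpa)
  have hn : (n : WithBot ℕ∞) ≤ ringKrullDim (S ⧸ Ideal.span {q}) :=
    ENat.WithBot.add_le_add_one_right_iff.1 ((ENat.WithBot.add_one_le_iff.2 hS).trans hdim)
  rw [ringKrullDim_quotient, Order.le_krullDim_iff] at hn
  obtain ⟨l, rfl⟩ := hn
  have hmem (i) : q ∈ (l i).1.asIdeal := (l i).2 (Ideal.mem_span_singleton_self q)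
  have hbot : ⊥ < (l 0).1 :=
    bot_lt_iff_ne_bot.2 fun h ↦ hq0 (by simpa [h] using hmem 0)
  have hl : StrictMono fun i ↦ (l i).1 := l.strictMono
  exact ⟨Matrix.vecCons ⊥ fun i ↦ (l i).1, hl.vecCons hbot, rfl, hmem 0⟩

theorem ringKrullDim_powerSeries_le (R : Type*) [CommRing R] [IsNoetherianRing R] :
    ringKrullDim (PowerSeries R) ≤ ringKrullDim R + 1 := by
  have hker : Ideal.span {PowerSeries.X} = RingHom.ker (PowerSeries.constantCoeff (R := R)) :=
    Ideal.ext fun f ↦ by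
      rw [Ideal.mem_span_singleton, PowerSeries.X_dvd_iff, RingHom.mem_ker]
  have hX : (PowerSeries.X : PowerSeries R) ∈ Ring.jacobson (PowerSeries R) := by
    rw [← Ideal.jacobson_bot]
    exact IsAdicComplete.le_jacobson_bot (Ideal.span {PowerSeries.X})
      (Ideal.mem_span_singleton_self _)
  calc ringKrullDim (PowerSeries R)
      ≤ ringKrullDim (PowerSeries R ⧸ Ideal.span {PowerSeries.X}) + 1 := by
        simpa using ringKrullDim_le_ringKrullDim_quotient_add_encard {PowerSeries.X} (by simpa)
    _ = ringKrullDim R + 1 := by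
        rw [ringKrullDim_eq_of_ringEquiv ((Ideal.quotEquivOfEq hker).trans
          (RingHom.quotientKerEquivOfSurjective PowerSeries.constantCoeff_surj))]

theorem ringKrullDim_mvPowerSeries_fin_le (R : Type*) [CommRing R] [IsNoetherianRing R] (n : ℕ) :
    ringKrullDim (MvPowerSeries (Fin n) R) ≤ ringKrullDim R + n := by
  induction n with
  | zero => simp [ringKrullDim_eq_of_ringEquiv (MvPowerSeries.isEmptyEquiv (Fin 0) R).toRingEquiv]
  | succ n ih =>
    calc ringKrullDim (MvPowerSeries (Fin (n + 1)) R)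
        = ringKrullDim (PowerSeries (MvPowerSeries (Fin n) R)) :=
          ringKrullDim_eq_of_ringEquiv (MvPowerSeries.finSuccEquiv R n).toRingEquiv
      _ ≤ ringKrullDim (MvPowerSeries (Fin n) R) + 1 := ringKrullDim_powerSeries_le _
      _ ≤ ringKrullDim R + n + 1 := by gcongr
      _ = ringKrullDim R + (n + 1 : ℕ) := by rw [Nat.cast_succ, add_assoc]

end KrullDimension

section AdicComplete

variable {S : Type*} [CommRing S] (I : Ideal S) [IsAdicComplete I S]

theorem nonempty_padicInt_ringHom (p : ℕ) [Fact p.Prime] (hp : (p : S) ∈ I) :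
    Nonempty (PadicInt p →+* S) := by
  have hchar (n : ℕ) : ringChar (S ⧸ I ^ n) ∣ p ^ n := by
    refine ringChar.dvd ?_
    rw [← map_natCast (Ideal.Quotient.mk (I ^ n)), Nat.cast_pow, Ideal.Quotient.eq_zero_iff_mem]
    exact Ideal.pow_mem_pow hp n
  refine ⟨IsAdicComplete.liftRingHom I
    (fun n ↦ (ZMod.castHom (hchar n) (S ⧸ I ^ n)).comp (PadicInt.toZModPow n)) ?_⟩
  intro m n hmn
  rw [← PadicInt.zmod_cast_comp_toZModPow m n hmn, ← RingHom.comp_assoc, ← RingHom.comp_assoc]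
  congr 1
  exact Subsingleton.elim _ _

theorem exists_mvPowerSeries_ringHom_X_eq {R σ : Type*} [CommRing R] [Finite σ] (ψ : R →+* S)
    {a : σ → S} (ha : ∀ i, a i ∈ I) :
    ∃ φ : MvPowerSeries σ R →+* S, ∀ i, φ (MvPowerSeries.X i) = a i := by
  let : WithIdeal S := ⟨I⟩
  -- The discrete topology on the coefficients makes `ψ` continuous.
  let : UniformSpace R := ⊥
  have : DiscreteUniformity R := ⟨rfl⟩
  have hI : IsAdic I := rfl
  obtain ⟨_, _⟩ := hI.isAdicComplete_iff.1 inferInstance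
  have hψ : Continuous ψ := continuous_of_discreteTopology
  have ha_eval : MvPowerSeries.HasEval a := by
    refine ⟨fun i ↦ ?_, by simp⟩
    rw [IsTopologicallyNilpotent, hI.hasBasis_nhds_zero.tendsto_right_iff]
    intro n _
    filter_upwards [Filter.eventually_ge_atTop n] with k hk
    exact Ideal.pow_le_pow_right hk (Ideal.pow_mem_pow (ha i) k)
  refine ⟨MvPowerSeries.eval₂Hom hψ ha_eval, fun i ↦ ?_⟩
  rw [MvPowerSeries.coe_eval₂Hom, MvPowerSeries.eval₂_X]

end AdicComplete

open IsLocalRing in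
theorem exists_embedding_padic_power_series_two_vars_general (p : ℕ) [Fact p.Prime] (n : ℕ)
    (S : Type*) [CommRing S] [IsDomain S] [IsNoetherianRing S] [IsLocalRing S]
    [IsAdicComplete (maximalIdeal S) S] [CharP (ResidueField S) p] [CharZero S]
    (hS : n < ringKrullDim S) :
    ∃ f : MvPowerSeries (Fin n) (PadicInt p) →+* S, Function.Injective f := by
  have hp : (p : S) ∈ maximalIdeal S := by
    rw [← residue_eq_zero_iff, map_natCast, CharP.cast_eq_zero]
  have hp0 : (p : S) ≠ 0 := Nat.cast_ne_zero.2 (Fact.out : p.Prime).ne_zero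
  obtain ⟨P, hP, hP_bot, hpP⟩ := exists_strictMono_primeSpectrum_bot_mem
    (by rwa [ringJacobson_eq_maximalIdeal]) hp0 hS
  have hlt (i : Fin n) : (P i.succ.castSucc).asIdeal < (P i.succ.succ).asIdeal :=
    hP i.succ.castSucc_lt_succ
  choose x hx_mem hx_notMem using fun i ↦ SetLike.exists_of_lt (hlt i)
  obtain ⟨ψ⟩ := nonempty_padicInt_ringHom (maximalIdeal S) p hp
  obtain ⟨φ, hφ⟩ := exists_mvPowerSeries_ringHom_X_eq (maximalIdeal S) ψ
    fun i ↦ le_maximalIdeal (P i.succ.succ).2.ne_top (hx_mem i)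
  have hsep (i : Fin (n + 1)) : ∃ a, φ a ∈ (P i.succ).asIdeal ∧ φ a ∉ (P i.castSucc).asIdeal := by
    cases i using Fin.cases with
    | zero => exact ⟨p, by simpa using hpP, by simpa [hP_bot] using hp0⟩
    | succ i => exact ⟨MvPowerSeries.X i, by simpa only [hφ] using ⟨hx_mem i, hx_notMem i⟩⟩
  have hdim : ringKrullDim (MvPowerSeries (Fin n) (PadicInt p)) ≤ (n + 1 : ℕ) := by
    simpa [IsDiscreteValuationRing.ringKrullDim_eq_one, add_comm] using
      ringKrullDim_mvPowerSeries_fin_le (PadicInt p) n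
  have : IsDomain (MvPowerSeries (Fin n) (PadicInt p)) := NoZeroDivisors.to_isDomain _
  have hker : (P 0).asIdeal.comap φ = ⊥ := comap_eq_bot_of_separates_chain φ hP.monotone hsep hdim
  rw [hP_bot, PrimeSpectrum.asIdeal_bot, ← RingHom.ker_eq_comap_bot] at hker
  exact ⟨φ, (RingHom.injective_iff_ker_eq_bot φ).2 hker⟩

/-- Every commutative Noetherian local pro-`p` domain of characteristic
zero and Krull dimension `> 2` contains a copy of `ℤ_p⟦s₁, s₂⟧`: there is an injective
ring homomorphism `ℤ_p⟦s₁, s₂⟧ → S`. -/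
theorem exists_embedding_padic_power_series_two_vars (p : ℕ) [Fact p.Prime]
    (S : Type) [CommRing S] [IsDomain S] [IsNoetherianRing S] [IsLocalRing S]
    [IsAdicComplete (IsLocalRing.maximalIdeal S) S]
    [Finite (IsLocalRing.ResidueField S)] [CharP (IsLocalRing.ResidueField S) p]
    [CharZero S]
    (hS : 2 < ringKrullDim S) :
    ∃ f : MvPowerSeries (Fin 2) (PadicInt p) →+* S, Function.Injective f :=
  exists_embedding_padic_power_series_two_vars_general p 2 S hS
end

section
/- Let p be a prime and let S be a commutative Noetherian local pro-p domain of characteristic p with Krull dimension strictly greater than 1. Then there exists an injective ring homomorphism from 𝔽_p⟦s₁, s₂⟧, the power series ring in two variables over the field with p elements, into S. -/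
/-!
Let `P₀ < ⋯ < Pₙ` be a chain of primes in a complete local algebra over a field `k`, choose
`aᵢ ∈ Pᵢ₊₁ \ Pᵢ`, and evaluate power series at `a`. Suppose that `f ≠ 0` involves only the
variables `Xᵢ, Xᵢ₊₁, …` and that `f(a) ∈ Pᵢ`. Dividing `f` by the largest possible power of `Xᵢ`
preserves membership in `Pᵢ`, because `aᵢ ∉ Pᵢ`; setting `Xᵢ = 0` afterwards leaves a nonzero
series in `Xᵢ₊₁, …` whose value lies in `Pᵢ₊₁`, because `aᵢ ∈ Pᵢ₊₁`. Iterating, one arrives at a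
nonzero constant of `k` in the proper ideal `Pₙ`, which is absurd. So `f(a) ∉ P₀` for all `f ≠ 0`.
-/

open MvPowerSeries IsLocalRing

section InvolvesOnly

variable {σ R : Type*}

/-- The power series `f` involves only the variables indexed by `T`: every monomial with a nonzero
coefficient in `f` is a product of such variables. It is used to eliminate the variables of a power
series one after the other without changing the power series ring. -/
def InvolvesOnly [Semiring R] (f : MvPowerSeries σ R) (T : Set σ) : Prop :=
  ∀ m, coeff m f ≠ 0 → (m.support : Set σ) ⊆ T

theorem InvolvesOnly.eq_C [Semiring R] {f : MvPowerSeries σ R} (hf : InvolvesOnly f ∅) :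
    f = C (constantCoeff f) := by
  classical
  ext m
  rw [coeff_C]
  split_ifs with hm
  · rw [hm, coeff_zero_eq_constantCoeff_apply]
  · by_contra hfm
    exact hm (by simpa using hf m hfm)

theorem InvolvesOnly.of_X_pow_mul [Semiring R] {s : σ} {e : ℕ} {g : MvPowerSeries σ R} {T : Set σ}
    (hg : InvolvesOnly (X s ^ e * g) T) : InvolvesOnly g T := by
  intro m hm
  have hsupp : m.support ⊆ (Finsupp.single s e + m).support :=
    Finsupp.support_mono le_add_self
  refine (Finset.coe_subset.2 hsupp).trans (hg _ ?_)
  rwa [X_pow_eq, coeff_add_monomial_mul, one_mul]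

theorem InvolvesOnly.exists_eq_add_X_mul [Semiring R] {g : MvPowerSeries σ R} {T : Set σ}
    (hg : InvolvesOnly g T) (s : σ) :
    ∃ r h, InvolvesOnly r (T \ {s}) ∧ g = r + X s * h := by
  let r : MvPowerSeries σ R := fun m => if m s = 0 then coeff m g else 0
  let q : MvPowerSeries σ R := fun m => if m s = 0 then 0 else coeff m g
  have coeff_r (m : σ →₀ ℕ) : coeff m r = if m s = 0 then coeff m g else 0 := rfl
  have coeff_q (m : σ →₀ ℕ) : coeff m q = if m s = 0 then 0 else coeff m g := rfl
  obtain ⟨h, hq⟩ : X s ∣ q := X_dvd_iff.2 fun m hm => by rw [coeff_q, if_pos hm]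
  refine ⟨r, h, fun m hm => ?_, ?_⟩
  · obtain ⟨hms, hmg⟩ : m s = 0 ∧ coeff m g ≠ 0 := by simpa [coeff_r] using hm
    exact Set.subset_sdiff_singleton (hg m hmg) (by simpa using hms)
  · ext m
    rw [← hq, map_add, coeff_r, coeff_q]
    split_ifs <;> simp

end InvolvesOnly

theorem exists_eq_X_pow_mul_and_not_X_dvd {σ R : Type*} [Semiring R] {f : MvPowerSeries σ R}
    (hf : f ≠ 0) (s : σ) : ∃ (e : ℕ) (g : MvPowerSeries σ R), f = X s ^ e * g ∧ ¬ X s ∣ g := by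
  obtain ⟨m, hm⟩ := (MvPowerSeries.ne_zero_iff_exists_coeff_ne_zero f).1 hf
  have hfin : FiniteMultiplicity (X s) f :=
    ⟨m s, fun hdvd => hm (X_pow_dvd_iff.1 hdvd m (m s).lt_succ_self)⟩
  exact ⟨_, hfin.exists_eq_pow_mul_and_not_dvd⟩

section PrimeChain

variable {n : ℕ} {R S : Type*} [CommRing S] {P : Fin (n + 1) → PrimeSpectrum S}

theorem map_notMem_of_involvesOnly_of_monotone [Semiring R]
    {φ : MvPowerSeries (Fin n) R →+* S} (hP : Monotone P)
    (hX_mem : ∀ i, φ (X i) ∈ (P i.succ).asIdeal)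
    (hX_notMem : ∀ i, φ (X i) ∉ (P i.castSucc).asIdeal)
    (hC : ∀ c ≠ 0, φ (C c) ∉ (P (Fin.last n)).asIdeal)
    (j : Fin (n + 1)) {f : MvPowerSeries (Fin n) R} (hf : f ≠ 0)
    (hfj : InvolvesOnly f {i | j ≤ i.castSucc}) : φ f ∉ (P j).asIdeal := by
  induction j using Fin.reverseInduction generalizing f with
  | last =>
    have hempty : {i : Fin n | Fin.last n ≤ i.castSucc} = ∅ := by simp
    rw [hempty] at hfj
    rw [hfj.eq_C] at hf ⊢
    exact hC _ fun hc => hf (by rw [hc, map_zero])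
  | cast j ih =>
    intro hφf
    obtain ⟨e, g, rfl, hg⟩ := exists_eq_X_pow_mul_and_not_X_dvd hf j
    obtain ⟨r, h, hr, rfl⟩ := hfj.of_X_pow_mul.exists_eq_add_X_mul j
    have hr_ne : r ≠ 0 := by
      rintro rfl
      exact hg (by simp)
    have hφg : φ (r + X j * h) ∈ (P j.castSucc).asIdeal := by
      rw [map_mul, map_pow] at hφf
      exact ((P j.castSucc).isPrime.mem_or_mem hφf).resolve_left
        fun hpow => hX_notMem j ((P j.castSucc).isPrime.mem_of_pow_mem e hpow)
    have hφr : φ r ∈ (P j.succ).asIdeal := by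
      have hφg' := hP j.castSucc_lt_succ.le hφg
      rw [map_add, map_mul] at hφg'
      exact ((P j.succ).asIdeal.add_mem_iff_left (Ideal.mul_mem_right _ _ (hX_mem j))).1 hφg'
    have hvars : {i : Fin n | j.castSucc ≤ i.castSucc} \ {j} = {i | j.succ ≤ i.castSucc} := by
      ext i
      simp [lt_iff_le_and_ne, eq_comm]
    exact ih hr_ne (hvars ▸ hr) hφr

theorem injective_of_prime_chain [Ring R] {φ : MvPowerSeries (Fin n) R →+* S}
    (hP : Monotone P) (hX_mem : ∀ i, φ (X i) ∈ (P i.succ).asIdeal)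
    (hX_notMem : ∀ i, φ (X i) ∉ (P i.castSucc).asIdeal)
    (hC : ∀ c ≠ 0, φ (C c) ∉ (P (Fin.last n)).asIdeal) : Function.Injective φ := by
  refine (injective_iff_map_eq_zero φ).2 fun f hφf => by_contra fun hf => ?_
  refine map_notMem_of_involvesOnly_of_monotone hP hX_mem hX_notMem hC 0 hf
    (fun _ _ i _ => Fin.zero_le i.castSucc) ?_
  rw [hφf]
  exact zero_mem _

end PrimeChain

theorem hasEval_of_isAdic {σ S : Type*} [Finite σ] [CommRing S] [TopologicalSpace S]
    {I : Ideal S} (hI : IsAdic I) {a : σ → S} (ha : ∀ s, a s ∈ I) : HasEval a where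
  hpow s := hI.hasBasis_nhds_zero.tendsto_right_iff.2 fun n _ =>
    (Filter.eventually_ge_atTop n).mono fun k hk =>
      Ideal.pow_le_pow_right hk (Ideal.pow_mem_pow (ha s) k)
  tendsto_zero := by simp [Filter.cofinite_eq_bot]

theorem exists_algHom_X_eq_of_isAdicComplete {σ k S : Type*} [Finite σ] [CommRing k] [CommRing S]
    [Algebra k S] (I : Ideal S) [IsAdicComplete I S] {a : σ → S} (ha : ∀ s, a s ∈ I) :
    ∃ φ : MvPowerSeries σ k →ₐ[k] S, ∀ s, φ (X s) = a s := by
  let _ : WithIdeal S := ⟨I⟩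
  have hI : IsAdic I := rfl
  obtain ⟨_, _⟩ := hI.isAdicComplete_iff.1 inferInstance
  let _ : UniformSpace k := ⊥
  have : DiscreteTopology k := ⟨rfl⟩
  have : DiscreteUniformity k := ⟨rfl⟩
  have : IsUniformAddGroup k := ⟨DiscreteUniformity.uniformContinuous _ _⟩
  have : ContinuousSMul k S := continuousSMul_of_algebraMap k S continuous_of_discreteTopology
  refine ⟨aeval (hasEval_of_isAdic hI ha), fun s => ?_⟩
  rw [coe_aeval, eval₂_X]

theorem exists_embedding_finite_field_power_series_two_vars_general {k S : Type*} [Field k]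
    [CommRing S] [IsLocalRing S] [IsAdicComplete (maximalIdeal S) S] [Algebra k S] {n : ℕ}
    (hn : n ≤ ringKrullDim S) :
    ∃ φ : MvPowerSeries (Fin n) k →ₐ[k] S, Function.Injective φ := by
  obtain ⟨P, rfl⟩ := Order.le_krullDim_iff.1 hn
  have hstep (i : Fin P.length) : (P i.castSucc).asIdeal < (P i.succ).asIdeal := P.step i
  choose a ha_mem ha_notMem using fun i => SetLike.exists_of_lt (hstep i)
  have ha (i) : a i ∈ maximalIdeal S :=
    le_maximalIdeal (P i.succ).isPrime.ne_top (ha_mem i)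
  obtain ⟨φ, hφ⟩ := exists_algHom_X_eq_of_isAdicComplete (k := k) (maximalIdeal S) ha
  refine ⟨φ, injective_of_prime_chain (φ := φ.toRingHom) P.monotone (fun i => ?_) (fun i => ?_)
    fun c hc hmem => (P (Fin.last _)).isPrime.ne_top ?_⟩
  · exact (hφ i).symm ▸ ha_mem i
  · exact (hφ i).symm ▸ ha_notMem i
  · exact Ideal.eq_top_of_isUnit_mem _ hmem ((hc.isUnit.map C).map φ.toRingHom)

/-- Every commutative Noetherian local pro-`p` domain of characteristic
`p` and Krull dimension `> 1` contains a copy of `𝔽_p⟦s₁, s₂⟧`: there is an injective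
ring homomorphism `𝔽_p⟦s₁, s₂⟧ → S`. -/
theorem exists_embedding_finite_field_power_series_two_vars (p : ℕ) [Fact p.Prime]
    (S : Type) [CommRing S] [IsDomain S] [IsNoetherianRing S] [IsLocalRing S]
    [IsAdicComplete (IsLocalRing.maximalIdeal S) S]
    [Finite (IsLocalRing.ResidueField S)] [CharP (IsLocalRing.ResidueField S) p]
    [CharP S p]
    (hS : 1 < ringKrullDim S) :
    ∃ f : MvPowerSeries (Fin 2) (ZMod p) →+* S, Function.Injective f := by
  let _ := ZMod.algebra S p
  obtain ⟨φ, hφ⟩ := exists_embedding_finite_field_power_series_two_vars_general (k := ZMod p)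
    (n := 2) (ENat.WithBot.add_one_le_iff.2 hS)
  exact ⟨φ, hφ⟩
end
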